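/- arXiv:1601.03353 — 2 statements merged into one kernel-verified Lean document; each statement's English description precedes it below -/
import Mathlib

section
/- (Theorem B1) Let φ ∈ A(𝔻) be a symbol mapping 𝔻̄ into 𝔻̄, not equal to the identity, and assume there is no z₀ ∈ 𝔻 such that the iterates φ^n converge to z₀ uniformly on compact subsets of 𝔻 (φ has no interior Denjoy–Wolff point). Then: (1) C_φ : A(𝔻) → A(𝔻) is mean ergodic if and only if either φ is an elliptic automorphism, or there exists z₀ ∈ ∂𝔻 such that φ^n → z₀ uniformly on compact subsets of 𝔻 and for every z ∈ ∂𝔻 and every neighborhood U of z₀ the set {n ∈ ℕ : φ^n(z) ∈ U} has density 1. (2) C_φ is uniformly mean ergodic if and only if φ is an elliptic automorphism with φ^k = identity for some positive integer k. -/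
open Metric Set Filter Complex
open scoped Topology Classical

noncomputable section

/-- Membership in the disc algebra `A(𝔻)`: continuous on the closed unit disc and
holomorphic on the open unit disc. -/
def IsDiscAlg (f : ℂ → ℂ) : Prop :=
  ContinuousOn f (closedBall (0:ℂ) 1) ∧ DifferentiableOn ℂ f (ball (0:ℂ) 1)

/-- Membership in `H^∞(𝔻)`: bounded and holomorphic on the open unit disc. -/
def IsHInf (f : ℂ → ℂ) : Prop :=
  DifferentiableOn ℂ f (ball (0:ℂ) 1) ∧ ∃ M : ℝ, ∀ z ∈ ball (0:ℂ) 1, ‖f z‖ ≤ M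

/-- The Cesàro means `(C_φ)_[n] f = (1/n) ∑_{m=1}^n f ∘ φ^m` of the composition
operator `C_φ f = f ∘ φ`. -/
def cesaro (φ f : ℂ → ℂ) (n : ℕ) (z : ℂ) : ℂ :=
  (n : ℂ)⁻¹ * ∑ m ∈ Finset.Icc 1 n, f (φ^[m] z)

/-- `C_φ` is mean ergodic on `A(𝔻)`: for each `f ∈ A(𝔻)` the Cesàro means converge
in the sup norm on the closed disc. -/
def MeanErgodicDiscAlg (φ : ℂ → ℂ) : Prop :=
  ∀ f : ℂ → ℂ, IsDiscAlg f →
    ∃ g : ℂ → ℂ, TendstoUniformlyOn (cesaro φ f) g atTop (closedBall (0:ℂ) 1)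

/-- `C_φ` is uniformly mean ergodic on `A(𝔻)`: the Cesàro means converge in operator
norm, i.e. uniformly over the unit ball of `A(𝔻)`. -/
def UnifMeanErgodicDiscAlg (φ : ℂ → ℂ) : Prop :=
  ∃ P : (ℂ → ℂ) → ℂ → ℂ, ∀ ε > (0:ℝ), ∃ N : ℕ, ∀ n ≥ N,
    ∀ f : ℂ → ℂ, IsDiscAlg f → (∀ z ∈ closedBall (0:ℂ) 1, ‖f z‖ ≤ 1) →
      ∀ z ∈ closedBall (0:ℂ) 1, ‖cesaro φ f n z - P f z‖ ≤ ε

/-- `C_φ` is mean ergodic on `H^∞(𝔻)`: for each `f ∈ H^∞(𝔻)` the Cesàro means converge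
in the sup norm on the open disc. -/
def MeanErgodicHInf (φ : ℂ → ℂ) : Prop :=
  ∀ f : ℂ → ℂ, IsHInf f →
    ∃ g : ℂ → ℂ, TendstoUniformlyOn (cesaro φ f) g atTop (ball (0:ℂ) 1)

/-- `C_φ` is uniformly mean ergodic on `H^∞(𝔻)`: the Cesàro means converge in operator
norm, i.e. uniformly over the unit ball of `H^∞(𝔻)`. -/
def UnifMeanErgodicHInf (φ : ℂ → ℂ) : Prop :=
  ∃ P : (ℂ → ℂ) → ℂ → ℂ, ∀ ε > (0:ℝ), ∃ N : ℕ, ∀ n ≥ N,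
    ∀ f : ℂ → ℂ, IsHInf f → (∀ z ∈ ball (0:ℂ) 1, ‖f z‖ ≤ 1) →
      ∀ z ∈ ball (0:ℂ) 1, ‖cesaro φ f n z - P f z‖ ≤ ε

/-- `φ` is an automorphism (biholomorphic self-map) of the open unit disc. -/
def IsDiscAutomorphism (φ : ℂ → ℂ) : Prop :=
  DifferentiableOn ℂ φ (ball (0:ℂ) 1) ∧ MapsTo φ (ball (0:ℂ) 1) (ball (0:ℂ) 1) ∧
  ∃ ψ : ℂ → ℂ, DifferentiableOn ℂ ψ (ball (0:ℂ) 1) ∧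
    MapsTo ψ (ball (0:ℂ) 1) (ball (0:ℂ) 1) ∧
    (∀ z ∈ ball (0:ℂ) 1, ψ (φ z) = z) ∧ ∀ z ∈ ball (0:ℂ) 1, φ (ψ z) = z

/-- An elliptic automorphism of the disc: an automorphism with a fixed point in `𝔻`. -/
def IsEllipticAutomorphism (φ : ℂ → ℂ) : Prop :=
  IsDiscAutomorphism φ ∧ ∃ z ∈ ball (0:ℂ) 1, φ z = z

/-- A hyperbolic automorphism of the disc: an automorphism with exactly two fixed
points, both on the unit circle. -/
def IsHyperbolicAutomorphism (φ : ℂ → ℂ) : Prop :=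
  IsDiscAutomorphism φ ∧ ∃ p q : ℂ, p ≠ q ∧ ‖p‖ = 1 ∧ ‖q‖ = 1 ∧ φ p = p ∧ φ q = q ∧
    ∀ z ∈ closedBall (0:ℂ) 1, φ z = z → z = p ∨ z = q

/-- A parabolic automorphism of the disc: an automorphism with exactly one fixed
point, lying on the unit circle. -/
def IsParabolicAutomorphism (φ : ℂ → ℂ) : Prop :=
  IsDiscAutomorphism φ ∧ ∃ p : ℂ, ‖p‖ = 1 ∧ φ p = p ∧
    ∀ z ∈ closedBall (0:ℂ) 1, φ z = z → z = p

/-- A set `J ⊆ ℕ` has density one: `#(J ∩ [0,N]) / N → 1` as `N → ∞`. -/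
def HasDensityOne (J : Set ℕ) : Prop :=
  Tendsto (fun N : ℕ => (((Finset.range (N + 1)).filter (fun n => n ∈ J)).card : ℝ) / N)
    atTop (𝓝 1)

/-- A typical weight on `𝔻`: continuous, strictly positive, bounded, radial,
non-increasing in `|z|`, and tending to `0` as `|z| → 1`. -/
def IsTypicalWeight (v : ℂ → ℝ) : Prop :=
  ContinuousOn v (ball (0:ℂ) 1) ∧ (∀ z ∈ ball (0:ℂ) 1, 0 < v z) ∧
  (∃ M : ℝ, ∀ z ∈ ball (0:ℂ) 1, v z ≤ M) ∧
  (∀ z ∈ ball (0:ℂ) 1, ∀ w ∈ ball (0:ℂ) 1, ‖z‖ = ‖w‖ → v z = v w) ∧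
  (∀ z ∈ ball (0:ℂ) 1, ∀ w ∈ ball (0:ℂ) 1, ‖z‖ ≤ ‖w‖ → v w ≤ v z) ∧
  (∀ ε > (0:ℝ), ∃ r : ℝ, r < 1 ∧ ∀ z ∈ ball (0:ℂ) 1, r ≤ ‖z‖ → v z < ε)

/-- Membership in the weighted space `H_v^∞`. -/
def IsHvInf (v : ℂ → ℝ) (f : ℂ → ℂ) : Prop :=
  DifferentiableOn ℂ f (ball (0:ℂ) 1) ∧ ∃ M : ℝ, ∀ z ∈ ball (0:ℂ) 1, v z * ‖f z‖ ≤ M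

/-- Membership in the weighted space `H_v^0`. -/
def IsHv0 (v : ℂ → ℝ) (f : ℂ → ℂ) : Prop :=
  IsHvInf v f ∧
  ∀ ε > (0:ℝ), ∃ r : ℝ, r < 1 ∧ ∀ z ∈ ball (0:ℂ) 1, r ≤ ‖z‖ → v z * ‖f z‖ < ε

/-!
By the Schwarz–Pick lemma, a symbol that fixes `a ∈ 𝔻` either is the rotation `diskRotation a l` or
has iterates tending to `a`. Without interior fixed points, the fixed points of `r • φ`
accumulate, as `r → 1`, at some `z₀ ∈ ∂𝔻`, and in the limit Schwarz–Pick says that the Poisson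
kernel with pole at `z₀` increases along orbits (Wolff's lemma); hence the iterates tend to `z₀`.

For a rotation, the powers of `mobius a` are eigenfunctions of `C_φ` with dense span, and their
Cesàro means are geometric sums. For a boundary point `z₀`, the means of `f` can only tend to
`f z₀`; applied to the peak function `1 - conj z₀ * z`, this forces every orbit to visit each
neighborhood of `z₀` with density one. Conversely, density one gives pointwise convergence of the
means of `‖f - f z₀‖`, which compactness makes uniform.

For a rotation of infinite order the powers of `mobius a`, and for a boundary point the powers of
`conj z₀ * z`, exclude uniform mean ergodicity: along them the limits in the exponent and in the
length of the mean do not commute.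
-/

section BirkhoffAverages

variable {X E : Type*} {T : X → X}

theorem hasDensityOne_iff_tendsto_birkhoffAverage_indicator (T : X → X) (U : Set X) (x : X) :
    HasDensityOne {n | T^[n] x ∈ U} ↔
      Tendsto (birkhoffAverage ℝ T (Uᶜ.indicator (1 : X → ℝ)) · x) atTop (𝓝 0) := by
  rw [HasDensityOne, ← tendsto_add_atTop_iff_nat
    (f := (birkhoffAverage ℝ T (Uᶜ.indicator (1 : X → ℝ)) · x)) 1]
  have hcard (N : ℕ) : (((Finset.range N).filter (· ∈ {n | T^[n] x ∈ U})).card : ℝ) =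
      N - birkhoffSum T (Uᶜ.indicator (1 : X → ℝ)) N x := by
    rw [eq_sub_iff_add_eq, birkhoffSum, Finset.cast_card, Finset.sum_filter,
      ← Finset.sum_add_distrib]
    calc _ = ∑ _k ∈ Finset.range N, (1 : ℝ) :=
          Finset.sum_congr rfl fun k _ ↦ by by_cases h : T^[k] x ∈ U <;> simp [h]
      _ = N := by simp
  have hratio : Tendsto (fun N : ℕ ↦ ((N : ℝ) + 1) / N) atTop (𝓝 1) := by
    simpa using (tendsto_natCast_div_add_atTop (1 : ℝ)).inv₀ one_ne_zero
  have hfreq : ∀ᶠ N : ℕ in atTop, (((Finset.range (N + 1)).filter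
      (· ∈ {n | T^[n] x ∈ U})).card : ℝ) / N =
        (N + 1) / N * (1 - birkhoffAverage ℝ T (Uᶜ.indicator (1 : X → ℝ)) (N + 1) x) :=
    (eventually_ne_atTop 0).mono fun N hN ↦ by
      rw [hcard, birkhoffAverage, smul_eq_mul]
      push_cast
      field_simp
  rw [tendsto_congr' hfreq]
  refine ⟨fun h ↦ ?_, fun h ↦ by simpa using hratio.mul (h.const_sub 1)⟩
  have hlim := (h.div hratio one_ne_zero).const_sub 1
  rw [div_one, sub_self] at hlim
  refine hlim.congr' ((eventually_ne_atTop 0).mono fun N hN ↦ ?_)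
  simp only [Pi.div_apply]
  field_simp
  ring

theorem hasDensityOne_of_eventually {J : Set ℕ} (hJ : ∀ᶠ n in atTop, n ∈ J) : HasDensityOne J := by
  have h := hasDensityOne_iff_tendsto_birkhoffAverage_indicator Nat.succ J 0
  simp only [Nat.succ_iterate, zero_add, ofPred_mem_eq] at h
  refine h.2 ?_
  have hlim : Tendsto (Jᶜ.indicator (1 : ℕ → ℝ)) atTop (𝓝 0) :=
    tendsto_const_nhds.congr' (hJ.mono fun n hn ↦ by simp [hn])
  simpa [birkhoffAverage, birkhoffSum, Nat.succ_iterate] using hlim.cesaro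

theorem birkhoffAverage_mono {g h : X → ℝ} {K : Set X} (hTK : MapsTo T K K)
    (hgh : ∀ x ∈ K, g x ≤ h x) (n : ℕ) {x : X} (hx : x ∈ K) :
    birkhoffAverage ℝ T g n x ≤ birkhoffAverage ℝ T h n x := by
  simp only [birkhoffAverage, birkhoffSum, smul_eq_mul]
  gcongr with k _
  exact hgh _ (hTK.iterate k hx)

theorem birkhoffAverage_nonneg {g : X → ℝ} {K : Set X} (hTK : MapsTo T K K)
    (hg : ∀ x ∈ K, 0 ≤ g x) (n : ℕ) {x : X} (hx : x ∈ K) : 0 ≤ birkhoffAverage ℝ T g n x :=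
  mul_nonneg (by positivity) (Finset.sum_nonneg fun k _ ↦ hg _ (hTK.iterate k hx))

theorem birkhoffAverage_const_mul (T : X → X) (c : ℝ) (g : X → ℝ) (n : ℕ) (x : X) :
    birkhoffAverage ℝ T (fun y ↦ c * g y) n x = c * birkhoffAverage ℝ T g n x :=
  (map_birkhoffAverage ℝ ℝ (AddMonoidHom.mulLeft c) T g n x).symm

theorem hasDensityOne_of_tendsto_birkhoffAverage {g : X → ℝ} {K U : Set X}
    (hTK : MapsTo T K K) {x : X} (hx : x ∈ K) {c : ℝ} (hc : 0 < c) (hg : ∀ y ∈ K, 0 ≤ g y)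
    (hgU : ∀ y ∈ K \ U, c ≤ g y)
    (hlim : Tendsto (birkhoffAverage ℝ T g · x) atTop (𝓝 0)) :
    HasDensityOne {n | T^[n] x ∈ U} := by
  rw [hasDensityOne_iff_tendsto_birkhoffAverage_indicator]
  refine squeeze_zero (g := fun n ↦ c⁻¹ * birkhoffAverage ℝ T g n x) (fun n ↦ ?_) (fun n ↦ ?_)
    (by simpa using hlim.const_mul c⁻¹)
  · exact birkhoffAverage_nonneg hTK (fun y _ ↦ indicator_nonneg (by simp) _) n hx
  rw [← birkhoffAverage_const_mul]
  refine birkhoffAverage_mono hTK (fun y hy ↦ ?_) n hx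
  by_cases hyU : y ∈ U
  · simpa [hyU] using mul_nonneg (inv_nonneg.2 hc.le) (hg y hy)
  · simpa [hyU, ← div_eq_inv_mul, one_le_div hc] using hgU y ⟨hy, hyU⟩

theorem continuousOn_birkhoffSum [TopologicalSpace X] [TopologicalSpace E] [AddCommMonoid E]
    [ContinuousAdd E] {f : X → E} {K : Set X} (hT : ContinuousOn T K) (hTK : MapsTo T K K)
    (hf : ContinuousOn f K) (n : ℕ) : ContinuousOn (birkhoffSum T f n) K :=
  continuousOn_finsetSum _ fun k _ ↦ hf.comp (hT.iterate hTK k) (hTK.iterate k)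

theorem norm_birkhoffAverage_le [NormedAddCommGroup E] [NormedSpace ℝ E] (T : X → X)
    (f : X → E) (n : ℕ) (x : X) :
    ‖birkhoffAverage ℝ T f n x‖ ≤ birkhoffAverage ℝ T (‖f ·‖) n x := by
  rw [birkhoffAverage, birkhoffAverage, norm_smul, norm_inv, RCLike.norm_natCast, smul_eq_mul]
  gcongr
  exact norm_sum_le _ _

theorem birkhoffAverage_sub_const [AddCommGroup E] [Module ℝ E] (T : X → X) (f : X → E)
    (c : E) {n : ℕ} (hn : n ≠ 0) (x : X) :
    birkhoffAverage ℝ T (fun y ↦ f y - c) n x = birkhoffAverage ℝ T f n x - c := by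
  have hconst : birkhoffAverage ℝ T (fun _ ↦ c) n = fun _ ↦ c :=
    birkhoffAverage_of_comp_eq ℝ rfl (Nat.cast_ne_zero.2 hn)
  change birkhoffAverage ℝ T (f - fun _ ↦ c) n x = _
  rw [birkhoffAverage_sub]
  simp only [Pi.sub_apply, hconst]

variable [TopologicalSpace X] {K : Set X}

/- By compactness finitely many lengths suffice to make a Birkhoff sum negative; cutting an orbit
into such blocks, only the last, incomplete block contributes. -/
theorem exists_birkhoffSum_le_of_isCompact {g : X → ℝ} (hK : IsCompact K)
    (hT : ContinuousOn T K) (hTK : MapsTo T K K) (hg : ContinuousOn g K)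
    (hneg : ∀ x ∈ K, ∃ n, birkhoffSum T g n x < 0) :
    ∃ C, ∀ n, ∀ x ∈ K, birkhoffSum T g n x ≤ C := by
  obtain ⟨N, hN⟩ : ∃ N : ℕ, ∀ x ∈ K, ∃ n ≤ N, birkhoffSum T g n x < 0 := by
    refine hK.induction_on (p := fun s ↦ ∃ N : ℕ, ∀ x ∈ s, ∃ n ≤ N, birkhoffSum T g n x < 0)
      (by simp) (fun s t hst ⟨N, h⟩ ↦ ⟨N, fun x hx ↦ h x (hst hx)⟩) ?_ fun x hx ↦ ?_
    · rintro s t ⟨N, hs⟩ ⟨N', ht⟩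
      exact ⟨max N N', by grind⟩
    · obtain ⟨n, hn⟩ := hneg x hx
      exact ⟨_, (continuousOn_birkhoffSum hT hTK hg n x hx).eventually_lt_const hn, n,
        fun y hy ↦ ⟨n, le_rfl, hy⟩⟩
  obtain ⟨M, hM⟩ := hK.exists_bound_of_continuousOn hg
  have hshort : ∀ n ≤ N, ∀ x ∈ K, birkhoffSum T g n x ≤ N * |M| := fun n hn x hx ↦ calc
    birkhoffSum T g n x ≤ ∑ _k ∈ Finset.range n, |M| := Finset.sum_le_sum fun k _ ↦
      (le_abs_self _).trans ((hM _ (hTK.iterate k hx)).trans (le_abs_self M))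
    _ = n * |M| := by simp
    _ ≤ N * |M| := by gcongr
  refine ⟨N * |M|, fun n ↦ ?_⟩
  induction n using Nat.strong_induction_on with
  | _ n ih =>
    intro x hx
    rcases le_or_gt n N with hn | hn
    · exact hshort n hn x hx
    obtain ⟨m, hmN, hm⟩ := hN x hx
    have hm0 : m ≠ 0 := by rintro rfl; simp at hm
    have hrest := ih (n - m) (by omega) _ (hTK.iterate m hx)
    rw [show n = m + (n - m) by omega, birkhoffSum_add]
    linarith

theorem eventually_forall_birkhoffAverage_lt {g : X → ℝ} (hK : IsCompact K)
    (hT : ContinuousOn T K) (hTK : MapsTo T K K) (hg : ContinuousOn g K) {a b : ℝ} (hab : a < b)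
    (ha : ∀ x ∈ K, ∃ n ≠ 0, birkhoffAverage ℝ T g n x < a) :
    ∀ᶠ n in atTop, ∀ x ∈ K, birkhoffAverage ℝ T g n x < b := by
  have hsum : ∀ n : ℕ, n ≠ 0 → ∀ x, birkhoffSum T (fun y ↦ g y - a) n x =
      n * (birkhoffAverage ℝ T g n x - a) := fun n hn x ↦ by
    rw [← birkhoffAverage_sub_const T g a hn, birkhoffAverage, smul_eq_mul,
      mul_inv_cancel_left₀ (Nat.cast_ne_zero.2 hn)]
  obtain ⟨C, hC⟩ := exists_birkhoffSum_le_of_isCompact hK hT hTK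
    (g := fun y ↦ g y - a) (hg.sub continuousOn_const) fun x hx ↦ by
      obtain ⟨n, hn, hlt⟩ := ha x hx
      refine ⟨n, ?_⟩
      rw [hsum n hn]
      exact mul_neg_of_pos_of_neg (by positivity) (by linarith)
  filter_upwards [eventually_ne_atTop 0,
    (tendsto_const_div_atTop_nhds_zero_nat C).eventually_lt_const (sub_pos.2 hab)]
    with n hn hCn x hx
  have hle : birkhoffAverage ℝ T g n x - a ≤ C / n := by
    rw [le_div_iff₀' (by positivity), ← hsum n hn]
    exact hC n x hx
  linarith

variable [NormedAddCommGroup E]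

theorem tendsto_birkhoffAverage_norm_sub_of_hasDensityOne {f : X → E} (hK : IsCompact K)
    (hTK : MapsTo T K K) (hf : ContinuousOn f K) {x₀ x : X} (hx₀ : x₀ ∈ K) (hx : x ∈ K)
    (hden : ∀ U ∈ 𝓝 x₀, HasDensityOne {n | T^[n] x ∈ U}) :
    Tendsto (birkhoffAverage ℝ T (‖f · - f x₀‖) · x) atTop (𝓝 0) := by
  obtain ⟨M, hM⟩ := hK.exists_bound_of_continuousOn (f := fun y ↦ f y - f x₀)
    (hf.sub continuousOn_const)
  refine tendsto_order.2 ⟨fun b hb ↦ .of_forall fun n ↦ hb.trans_le ?_, fun b hb ↦ ?_⟩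
  · exact birkhoffAverage_nonneg hTK (fun y _ ↦ norm_nonneg _) n hx
  have hnear : ∀ᶠ y in 𝓝[K] x₀, ‖f y - f x₀‖ < b / 2 := by
    simpa [dist_eq_norm] using Metric.tendsto_nhds.1 (hf x₀ hx₀) (b / 2) (half_pos hb)
  obtain ⟨U, hU, hUb⟩ := mem_nhdsWithin_iff_exists_mem_nhds_inter.1 hnear
  have hmajor : ∀ y ∈ K, ‖f y - f x₀‖ - b / 2 ≤ M * Uᶜ.indicator (1 : X → ℝ) y := by
    intro y hy
    by_cases hyU : y ∈ U
    · have : ‖f y - f x₀‖ < b / 2 := hUb ⟨hyU, hy⟩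
      simp [hyU, this.le]
    · simpa [hyU] using (sub_le_self _ (half_pos hb).le).trans (hM y hy)
  have hlim :=
    ((hasDensityOne_iff_tendsto_birkhoffAverage_indicator T U x).1 (hden U hU)).const_mul M
  rw [mul_zero] at hlim
  filter_upwards [eventually_ne_atTop 0, hlim.eventually_lt_const (half_pos hb)] with n hn hlt
  have hle := birkhoffAverage_mono hTK hmajor n hx
  rw [birkhoffAverage_sub_const T _ _ hn, birkhoffAverage_const_mul] at hle
  linarith

variable [NormedSpace ℝ E]

theorem tendstoUniformlyOn_birkhoffAverage_of_hasDensityOne {f : X → E} (hK : IsCompact K)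
    (hT : ContinuousOn T K) (hTK : MapsTo T K K) (hf : ContinuousOn f K) {x₀ : X} (hx₀ : x₀ ∈ K)
    (hden : ∀ x ∈ K, ∀ U ∈ 𝓝 x₀, HasDensityOne {n | T^[n] x ∈ U}) :
    TendstoUniformlyOn (birkhoffAverage ℝ T f) (fun _ ↦ f x₀) atTop K := by
  refine Metric.tendstoUniformlyOn_iff.2 fun ε hε ↦ ?_
  have hpt : ∀ x ∈ K, ∃ n ≠ 0, birkhoffAverage ℝ T (‖f · - f x₀‖) n x < ε / 2 := fun x hx ↦ by
    have hlim := tendsto_birkhoffAverage_norm_sub_of_hasDensityOne hK hTK hf hx₀ hx (hden x hx)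
    exact ((eventually_ne_atTop 0).and (hlim.eventually_lt_const (half_pos hε))).exists
  filter_upwards [eventually_ne_atTop 0, eventually_forall_birkhoffAverage_lt hK hT hTK
    (hf.sub continuousOn_const).norm (half_lt_self hε) hpt] with n hn hlt x hx
  rw [dist_comm, dist_eq_norm, ← birkhoffAverage_sub_const T f _ hn]
  exact (norm_birkhoffAverage_le T _ n x).trans_lt (hlt x hx)

end BirkhoffAverages

section BoundedBirkhoffAverages

variable {X E : Type*} {T : X → X} {K : Set X}

theorem norm_birkhoffSum_le_of_forall_norm_le [SeminormedAddCommGroup E] {f : X → E} {C : ℝ}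
    (hTK : MapsTo T K K) (hf : ∀ x ∈ K, ‖f x‖ ≤ C) (n : ℕ) {x : X} (hx : x ∈ K) :
    ‖birkhoffSum T f n x‖ ≤ n * C := by
  simpa [birkhoffSum] using norm_sum_le_of_le (Finset.range n) fun k _ ↦ hf _ (hTK.iterate k hx)

theorem norm_birkhoffAverage_le_of_forall_norm_le [NormedAddCommGroup E] [NormedSpace ℝ E]
    {f : X → E} {C : ℝ} (hTK : MapsTo T K K) (hf : ∀ x ∈ K, ‖f x‖ ≤ C) (n : ℕ) {x : X}
    (hx : x ∈ K) : ‖birkhoffAverage ℝ T f n x‖ ≤ C := by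
  have hC : 0 ≤ C := (norm_nonneg _).trans (hf x hx)
  rw [birkhoffAverage, norm_smul, norm_inv, RCLike.norm_natCast]
  exact inv_mul_le_of_le_mul₀ (by positivity) hC
    (norm_birkhoffSum_le_of_forall_norm_le hTK hf n hx)

/- The difference `n S_k - k S_n` of rescaled Birkhoff sums is periodic in `n` with period `k`. -/
theorem norm_birkhoffAverage_sub_le_of_isPeriodicPt [NormedAddCommGroup E] [NormedSpace ℝ E]
    {f : X → E} {C : ℝ} (hTK : MapsTo T K K) (hf : ∀ x ∈ K, ‖f x‖ ≤ C) {k n : ℕ} (hk : 0 < k)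
    (hn : 0 < n) {x : X} (hx : x ∈ K) (hper : Function.IsPeriodicPt T k x) :
    ‖birkhoffAverage ℝ T f n x - birkhoffAverage ℝ T f k x‖ ≤ 2 * k * C / n := by
  have hC : 0 ≤ C := (norm_nonneg _).trans (hf x hx)
  set D : ℕ → E := fun m ↦ (k : ℝ) • birkhoffSum T f m x - (m : ℝ) • birkhoffSum T f k x with hD
  have hDper : Function.Periodic D k := fun m ↦ by
    simp only [hD, add_comm m k, birkhoffSum_add, hper.eq, Nat.cast_add, smul_add, add_smul]
    abel
  have hDle : ‖D n‖ ≤ 2 * k * k * C := by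
    have hmod : ((n % k : ℕ) : ℝ) ≤ k := by exact_mod_cast (Nat.mod_lt n hk).le
    rw [← hDper.map_mod_nat n]
    refine (norm_sub_le _ _).trans ?_
    rw [norm_smul, norm_smul, RCLike.norm_natCast, RCLike.norm_natCast]
    calc _ ≤ (k : ℝ) * ((n % k : ℕ) * C) + (n % k : ℕ) * (k * C) := by
          gcongr <;> exact norm_birkhoffSum_le_of_forall_norm_le hTK hf _ hx
      _ ≤ (k : ℝ) * (k * C) + k * (k * C) := by gcongr
      _ = 2 * k * k * C := by ring
  have hdiff : birkhoffAverage ℝ T f n x - birkhoffAverage ℝ T f k x = ((n : ℝ) * k)⁻¹ • D n := by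
    simp only [birkhoffAverage, hD, smul_sub, smul_smul]
    congr 2 <;> field_simp
  rw [hdiff, norm_smul, norm_inv, Real.norm_of_nonneg (by positivity)]
  calc ((n : ℝ) * k)⁻¹ * ‖D n‖ ≤ ((n : ℝ) * k)⁻¹ * (2 * k * k * C) := by gcongr
    _ = 2 * k * C / n := by field_simp

theorem birkhoffAverage_eq_of_eigenfunction {μ : ℂ} {g : X → ℂ} (hTK : MapsTo T K K)
    (hg : ∀ x ∈ K, g (T x) = μ * g x) (n : ℕ) {x : X} (hx : x ∈ K) :
    birkhoffAverage ℝ T g n x = (n : ℂ)⁻¹ * (∑ i ∈ Finset.range n, μ ^ i) * g x := by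
  have hpow : ∀ i : ℕ, g (T^[i] x) = μ ^ i * g x := fun i ↦ by
    induction i with
    | zero => simp
    | succ i ih => rw [Function.iterate_succ_apply', hg _ (hTK.iterate i hx), ih, pow_succ']; ring
  rw [birkhoffAverage_congr_ring ℝ ℂ, birkhoffAverage, birkhoffSum, smul_eq_mul, mul_assoc,
    Finset.sum_mul, Finset.sum_congr rfl fun i _ ↦ hpow i]

theorem tendsto_inv_mul_geom_sum {μ : ℂ} (hμ : ‖μ‖ ≤ 1) :
    Tendsto (fun n : ℕ ↦ (n : ℂ)⁻¹ * ∑ i ∈ Finset.range n, μ ^ i) atTop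
      (𝓝 (if μ = 1 then 1 else 0)) := by
  split_ifs with h
  · subst h
    refine tendsto_const_nhds.congr' ((eventually_ne_atTop 0).mono fun n hn ↦ ?_)
    simp [hn]
  · refine squeeze_zero_norm (a := fun n : ℕ ↦ 2 / ‖μ - 1‖ / n) (fun n ↦ ?_)
      (tendsto_const_div_atTop_nhds_zero_nat _)
    have hnum : ‖μ ^ n - 1‖ ≤ 2 := by
      have hpow : ‖μ ^ n‖ ≤ 1 := by simpa using pow_le_one₀ (norm_nonneg μ) hμ
      linarith [norm_sub_le (μ ^ n) 1, norm_one (α := ℂ)]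
    rw [geom_sum_eq h, norm_mul, norm_inv, norm_div, RCLike.norm_natCast, mul_comm,
      ← div_eq_mul_inv]
    gcongr

theorem tendstoUniformlyOn_birkhoffAverage_of_eigenfunction {μ : ℂ} {g : X → ℂ} {C : ℝ}
    (hμ : ‖μ‖ ≤ 1) (hTK : MapsTo T K K) (hg : ∀ x ∈ K, g (T x) = μ * g x)
    (hgC : ∀ x ∈ K, ‖g x‖ ≤ C) :
    TendstoUniformlyOn (birkhoffAverage ℝ T g) (fun x ↦ (if μ = 1 then 1 else 0) * g x)
      atTop K := by
  refine Metric.tendstoUniformlyOn_iff.2 fun ε hε ↦ ?_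
  have hlim : Tendsto (fun n : ℕ ↦ dist ((n : ℂ)⁻¹ * ∑ i ∈ Finset.range n, μ ^ i)
      (if μ = 1 then 1 else 0) * |C|) atTop (𝓝 0) := by
    simpa using (tendsto_iff_dist_tendsto_zero.1 (tendsto_inv_mul_geom_sum hμ)).mul_const |C|
  filter_upwards [hlim.eventually_lt_const hε] with n hn x hx
  rw [birkhoffAverage_eq_of_eigenfunction hTK hg n hx, dist_comm, dist_eq_norm, ← sub_mul, norm_mul,
    ← dist_eq_norm]
  exact (mul_le_mul_of_nonneg_left ((hgC x hx).trans (le_abs_self C)) dist_nonneg).trans_lt hn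

theorem exists_tendstoUniformlyOn_birkhoffAverage_polynomial_eval {μ : ℂ} {g : X → ℂ}
    {C : ℝ} (hμ : ‖μ‖ ≤ 1) (hTK : MapsTo T K K) (hg : ∀ x ∈ K, g (T x) = μ * g x)
    (hgC : ∀ x ∈ K, ‖g x‖ ≤ C) (p : Polynomial ℂ) :
    ∃ q, TendstoUniformlyOn (birkhoffAverage ℝ T fun x ↦ p.eval (g x)) q atTop K := by
  induction p using Polynomial.induction_on' with
  | add p₁ p₂ ih₁ ih₂ =>
    obtain ⟨q₁, hq₁⟩ := ih₁
    obtain ⟨q₂, hq₂⟩ := ih₂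
    refine ⟨q₁ + q₂, ?_⟩
    have hadd : birkhoffAverage ℝ T ((fun x ↦ p₁.eval (g x)) + fun x ↦ p₂.eval (g x)) =
        (birkhoffAverage ℝ T fun x ↦ p₁.eval (g x)) +
          birkhoffAverage ℝ T fun x ↦ p₂.eval (g x) := birkhoffAverage_add ℝ
    simpa only [Polynomial.eval_add, ← Pi.add_def, hadd] using hq₁.add hq₂
  | monomial n c =>
    refine ⟨_, tendstoUniformlyOn_birkhoffAverage_of_eigenfunction (μ := μ ^ n) (C := ‖c‖ * C ^ n)
      (by simpa using pow_le_one₀ (norm_nonneg μ) hμ) hTK (fun x hx ↦ ?_) fun x hx ↦ ?_⟩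
    · rw [Polynomial.eval_monomial, Polynomial.eval_monomial, hg x hx]
      ring
    · rw [Polynomial.eval_monomial, norm_mul, norm_pow]
      gcongr
      exact hgC x hx

theorem exists_tendstoUniformlyOn_birkhoffAverage_of_approx [NormedAddCommGroup E]
    [NormedSpace ℝ E] [CompleteSpace E] {f : X → E} (hTK : MapsTo T K K)
    (happ : ∀ ε > 0, ∃ p q : X → E, (∀ x ∈ K, ‖f x - p x‖ ≤ ε) ∧
      TendstoUniformlyOn (birkhoffAverage ℝ T p) q atTop K) :
    ∃ g, TendstoUniformlyOn (birkhoffAverage ℝ T f) g atTop K := by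
  have hcauchy : UniformCauchySeqOn (birkhoffAverage ℝ T f) atTop K := by
    refine Metric.uniformCauchySeqOn_iff.2 fun ε hε ↦ ?_
    obtain ⟨p, q, hfp, hpq⟩ := happ (ε / 3) (by positivity)
    obtain ⟨N, hN⟩ :=
      Metric.uniformCauchySeqOn_iff.1 hpq.uniformCauchySeqOn (ε / 3) (by positivity)
    refine ⟨N, fun m hm n hn x hx ↦ ?_⟩
    have hclose : ∀ i, dist (birkhoffAverage ℝ T f i x) (birkhoffAverage ℝ T p i x) ≤ ε / 3 :=
      fun i ↦ by
        have hsub : birkhoffAverage ℝ T (f - p) = birkhoffAverage ℝ T f - birkhoffAverage ℝ T p :=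
          birkhoffAverage_sub
        rw [dist_eq_norm, ← Pi.sub_apply, ← Pi.sub_apply, ← hsub]
        exact norm_birkhoffAverage_le_of_forall_norm_le hTK hfp i hx
    calc dist (birkhoffAverage ℝ T f m x) (birkhoffAverage ℝ T f n x)
        ≤ dist (birkhoffAverage ℝ T f m x) (birkhoffAverage ℝ T p m x) +
          dist (birkhoffAverage ℝ T p m x) (birkhoffAverage ℝ T p n x) +
          dist (birkhoffAverage ℝ T p n x) (birkhoffAverage ℝ T f n x) := dist_triangle4 _ _ _ _
      _ < ε := by linarith [hclose m, hclose n, hN m hm n hn x hx,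
          dist_comm (birkhoffAverage ℝ T p n x) (birkhoffAverage ℝ T f n x)]
  have hlim : ∀ x ∈ K, ∃ c, Tendsto (birkhoffAverage ℝ T f · x) atTop (𝓝 c) := fun x hx ↦
    cauchySeq_tendsto_of_complete (hcauchy.cauchySeq hx)
  choose! g hg using hlim
  exact ⟨g, hcauchy.tendstoUniformlyOn_of_tendsto hg⟩

end BoundedBirkhoffAverages

section Mobius

open scoped ComplexConjugate

/-- The involutive disc automorphism `z ↦ (a - z) / (1 - conj a * z)` exchanging `0` and `a`, for
`‖a‖ < 1`. -/
def mobius (a z : ℂ) : ℂ := (a - z) / (1 - conj a * z)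

@[simp] theorem mobius_self (a : ℂ) : mobius a a = 0 := by simp [mobius]

@[simp] theorem mobius_zero (a : ℂ) : mobius a 0 = a := by simp [mobius]

theorem one_sub_conj_mul_ne_zero {a z : ℂ} (ha : ‖a‖ < 1) (hz : ‖z‖ ≤ 1) : 1 - conj a * z ≠ 0 := by
  intro h
  have hnorm : ‖a‖ * ‖z‖ = 1 := by simpa using congrArg norm (sub_eq_zero.1 h).symm
  exact (mul_lt_one_of_nonneg_of_lt_one_left (norm_nonneg a) ha hz).ne hnorm

theorem norm_one_sub_conj_mul_sq_sub_norm_sub_sq (a z : ℂ) :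
    ‖1 - conj a * z‖ ^ 2 - ‖a - z‖ ^ 2 = (1 - ‖a‖ ^ 2) * (1 - ‖z‖ ^ 2) := by
  simp only [Complex.sq_norm, normSq_apply, sub_re, sub_im, mul_re, mul_im, conj_re, conj_im,
    one_re, one_im]
  ring

theorem norm_mobius_lt_one {a z : ℂ} (ha : ‖a‖ < 1) (hz : ‖z‖ < 1) : ‖mobius a z‖ < 1 := by
  rw [mobius, norm_div, div_lt_one (norm_pos_iff.2 (one_sub_conj_mul_ne_zero ha hz.le)),
    ← sq_lt_sq₀ (norm_nonneg _) (norm_nonneg _), ← sub_pos,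
    norm_one_sub_conj_mul_sq_sub_norm_sub_sq]
  exact mul_pos (by simpa using ha) (by simpa using hz)

theorem norm_mobius_le_one {a z : ℂ} (ha : ‖a‖ < 1) (hz : ‖z‖ ≤ 1) : ‖mobius a z‖ ≤ 1 := by
  rw [mobius, norm_div, div_le_one (norm_pos_iff.2 (one_sub_conj_mul_ne_zero ha hz)),
    ← sq_le_sq₀ (norm_nonneg _) (norm_nonneg _), ← sub_nonneg,
    norm_one_sub_conj_mul_sq_sub_norm_sub_sq]
  exact mul_nonneg (by simpa using ha.le) (by simpa using hz)

theorem mobius_mobius {a z : ℂ} (ha : ‖a‖ < 1) (hz : ‖z‖ ≤ 1) : mobius a (mobius a z) = z := by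
  have hden := one_sub_conj_mul_ne_zero ha (norm_mobius_le_one ha hz)
  rw [mobius, div_eq_iff hden]
  have hmul : mobius a z * (1 - conj a * z) = a - z :=
    div_mul_cancel₀ _ (one_sub_conj_mul_ne_zero ha hz)
  linear_combination -hmul

theorem mobius_eq_zero_iff {a z : ℂ} (ha : ‖a‖ < 1) (hz : ‖z‖ ≤ 1) : mobius a z = 0 ↔ z = a := by
  rw [mobius, div_eq_zero_iff, or_iff_left (one_sub_conj_mul_ne_zero ha hz), sub_eq_zero, eq_comm]

theorem mapsTo_mobius_ball {a : ℂ} (ha : ‖a‖ < 1) : MapsTo (mobius a) (ball 0 1) (ball 0 1) :=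
  fun z hz ↦ by simpa using norm_mobius_lt_one ha (mem_ball_zero_iff.1 hz)

theorem mapsTo_mobius_closedBall {a : ℂ} (ha : ‖a‖ < 1) :
    MapsTo (mobius a) (closedBall 0 1) (closedBall 0 1) :=
  fun z hz ↦ by simpa using norm_mobius_le_one ha (mem_closedBall_zero_iff.1 hz)

theorem isDiscAlg_mobius {a : ℂ} (ha : ‖a‖ < 1) : IsDiscAlg (mobius a) :=
  ⟨.div (by fun_prop) (by fun_prop) fun _ hz ↦
      one_sub_conj_mul_ne_zero ha (mem_closedBall_zero_iff.1 hz),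
    .div (by fun_prop) (by fun_prop) fun _ hz ↦
      one_sub_conj_mul_ne_zero ha (mem_ball_zero_iff.1 hz).le⟩

theorem norm_sub_le_two_mul_norm_mobius {a z : ℂ} (ha : ‖a‖ < 1) (hz : ‖z‖ ≤ 1) :
    ‖a - z‖ ≤ 2 * ‖mobius a z‖ := by
  have hden : ‖1 - conj a * z‖ ≤ 2 := calc
    ‖1 - conj a * z‖ ≤ 1 + ‖a‖ * ‖z‖ := by simpa using norm_sub_le 1 (conj a * z)
    _ ≤ 2 := by linarith [mul_le_one₀ ha.le (norm_nonneg z) hz]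
  calc ‖a - z‖ = ‖1 - conj a * z‖ * ‖mobius a z‖ := by
        rw [← norm_mul, mobius, mul_div_cancel₀ _ (one_sub_conj_mul_ne_zero ha hz)]
    _ ≤ 2 * ‖mobius a z‖ := by gcongr

variable {f : ℂ → ℂ}

/- Conjugating by Möbius involutions reduces the inequality to the Schwarz lemma. -/
theorem norm_mobius_le_norm_mobius_of_mapsTo_ball (hf : DifferentiableOn ℂ f (ball 0 1))
    (hmaps : MapsTo f (ball 0 1) (ball 0 1)) {a z : ℂ} (ha : ‖a‖ < 1) (hz : ‖z‖ < 1) :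
    ‖mobius (f a) (f z)‖ ≤ ‖mobius a z‖ := by
  have hfa : ‖f a‖ < 1 := by simpa using hmaps (mem_ball_zero_iff.2 ha)
  have hschwarz := Complex.norm_le_norm_of_mapsTo_ball (f := mobius (f a) ∘ f ∘ mobius a) (R := 1)
    ((isDiscAlg_mobius hfa).2.comp (hf.comp (isDiscAlg_mobius ha).2 (mapsTo_mobius_ball ha))
      (hmaps.comp (mapsTo_mobius_ball ha)))
    (((mapsTo_mobius_ball hfa).comp (hmaps.comp (mapsTo_mobius_ball ha))).mono_right
      ball_subset_closedBall) (by simp) (norm_mobius_lt_one ha hz)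
  simpa [mobius_mobius ha hz.le] using hschwarz

/-- The elliptic disc automorphism fixing `a` with multiplier `l`: the rotation `w ↦ l * w`
conjugated by the involution `mobius a`. -/
def diskRotation (a l z : ℂ) : ℂ := mobius a (l * mobius a z)

theorem diskRotation_self (a l : ℂ) : diskRotation a l a = a := by simp [diskRotation]

theorem mobius_diskRotation {a l z : ℂ} (ha : ‖a‖ < 1) (hl : ‖l‖ = 1) (hz : ‖z‖ ≤ 1) :
    mobius a (diskRotation a l z) = l * mobius a z :=
  mobius_mobius ha (by simpa [hl] using norm_mobius_le_one ha hz)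

theorem diskRotation_one {a z : ℂ} (ha : ‖a‖ < 1) (hz : ‖z‖ ≤ 1) : diskRotation a 1 z = z := by
  rw [diskRotation, one_mul, mobius_mobius ha hz]

theorem diskRotation_mul {a l m z : ℂ} (ha : ‖a‖ < 1) (hm : ‖m‖ = 1) (hz : ‖z‖ ≤ 1) :
    diskRotation a (l * m) z = diskRotation a l (diskRotation a m z) := by
  rw [diskRotation, diskRotation, mobius_diskRotation ha hm hz, mul_assoc]

theorem mapsTo_mul_left_ball {l : ℂ} (hl : ‖l‖ = 1) : MapsTo (l * ·) (ball (0 : ℂ) 1) (ball 0 1) :=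
  fun z hz ↦ by simpa [hl] using hz

theorem mapsTo_diskRotation_ball {a l : ℂ} (ha : ‖a‖ < 1) (hl : ‖l‖ = 1) :
    MapsTo (diskRotation a l) (ball 0 1) (ball 0 1) :=
  (mapsTo_mobius_ball ha).comp ((mapsTo_mul_left_ball hl).comp (mapsTo_mobius_ball ha))

theorem mapsTo_diskRotation_closedBall {a l : ℂ} (ha : ‖a‖ < 1) (hl : ‖l‖ = 1) :
    MapsTo (diskRotation a l) (closedBall 0 1) (closedBall 0 1) :=
  (mapsTo_mobius_closedBall ha).comp fun z hz ↦ by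
    simpa [hl] using mapsTo_mobius_closedBall ha hz

theorem isDiscAlg_diskRotation {a l : ℂ} (ha : ‖a‖ < 1) (hl : ‖l‖ = 1) :
    IsDiscAlg (diskRotation a l) :=
  ⟨(isDiscAlg_mobius ha).1.comp (continuousOn_const.mul (isDiscAlg_mobius ha).1) fun z hz ↦ by
      simpa [hl] using mapsTo_mobius_closedBall ha hz,
    (isDiscAlg_mobius ha).2.comp ((isDiscAlg_mobius ha).2.const_mul l)
      ((mapsTo_mul_left_ball hl).comp (mapsTo_mobius_ball ha))⟩

theorem isEllipticAutomorphism_diskRotation {a l : ℂ} (ha : ‖a‖ < 1) (hl : ‖l‖ = 1) :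
    IsEllipticAutomorphism (diskRotation a l) := by
  have hl' : ‖l⁻¹‖ = 1 := by simp [hl]
  have hl0 : l ≠ 0 := norm_ne_zero_iff.1 (by simp [hl])
  refine ⟨⟨(isDiscAlg_diskRotation ha hl).2, mapsTo_diskRotation_ball ha hl, diskRotation a l⁻¹,
    (isDiscAlg_diskRotation ha hl').2, mapsTo_diskRotation_ball ha hl', fun z hz ↦ ?_,
    fun z hz ↦ ?_⟩, a, by simpa using ha, diskRotation_self a l⟩
  all_goals
    have hz' : ‖z‖ ≤ 1 := (mem_ball_zero_iff.1 hz).le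
  · rw [← diskRotation_mul ha hl hz', inv_mul_cancel₀ hl0, diskRotation_one ha hz']
  · rw [← diskRotation_mul ha hl' hz', mul_inv_cancel₀ hl0, diskRotation_one ha hz']

/- Equality in the Schwarz lemma at one point forces a rotation. -/
theorem exists_eqOn_diskRotation_of_norm_mobius_eq (hf : DifferentiableOn ℂ f (ball 0 1))
    (hmaps : MapsTo f (ball 0 1) (ball 0 1)) {a z : ℂ} (ha : ‖a‖ < 1) (hz : ‖z‖ < 1)
    (hfa : f a = a) (hza : z ≠ a) (heq : ‖mobius a (f z)‖ = ‖mobius a z‖) :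
    ∃ l, ‖l‖ = 1 ∧ EqOn f (diskRotation a l) (ball 0 1) := by
  set G : ℂ → ℂ := mobius a ∘ f ∘ mobius a with hG
  have hGd : DifferentiableOn ℂ G (ball 0 1) :=
    (isDiscAlg_mobius ha).2.comp (hf.comp (isDiscAlg_mobius ha).2 (mapsTo_mobius_ball ha))
      (hmaps.comp (mapsTo_mobius_ball ha))
  have hGm : MapsTo G (ball 0 1) (ball 0 1) :=
    (mapsTo_mobius_ball ha).comp (hmaps.comp (mapsTo_mobius_ball ha))
  have hG0 : G 0 = 0 := by simp [hG, hfa]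
  have hGa : ∀ w, ‖w‖ < 1 → G (mobius a w) = mobius a (f w) := fun w hw ↦ by
    simp [hG, mobius_mobius ha hw.le]
  have hz0 : ‖mobius a z‖ ≠ 0 := norm_ne_zero_iff.2 ((mobius_eq_zero_iff ha hz.le).not.2 hza)
  have hslope : ‖dslope G 0 (mobius a z)‖ = 1 / 1 := by
    rw [dslope_of_ne _ (norm_ne_zero_iff.1 hz0), slope_def_field, hG0, hGa z hz, sub_zero, sub_zero,
      norm_div, heq, div_self hz0, div_one]
  have haffine := Complex.affine_of_mapsTo_ball_of_norm_dslope_eq_div (R₁ := 1) (R₂ := 1) hGd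
    (by rw [hG0]; exact hGm.mono_right ball_subset_closedBall)
    (by simpa using norm_mobius_lt_one ha hz) hslope
  refine ⟨dslope G 0 (mobius a z), by simpa using hslope, fun w hw ↦ ?_⟩
  have hGw : mobius a (f w) = dslope G 0 (mobius a z) * mobius a w := by
    rw [← hGa w (by simpa using hw), haffine (mapsTo_mobius_ball ha hw), hG0]
    simp [mul_comm]
  rw [diskRotation, ← hGw, mobius_mobius ha (mem_ball_zero_iff.1 (hmaps hw)).le]

end Mobius

section Orbits

theorem tendsto_iterate_and_apply_eq_of_antitone {X : Type*} [TopologicalSpace X] {T : X → X}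
    {u : X → ℝ} {x p : X} (hT : ContinuousAt T p) (hup : ContinuousAt u p)
    (huTp : ContinuousAt u (T p)) (hanti : Antitone fun n ↦ u (T^[n] x)) {ψ : ℕ → ℕ}
    (hψ : Tendsto ψ atTop atTop) (hlim : Tendsto (fun k ↦ T^[ψ k] x) atTop (𝓝 p)) :
    Tendsto (fun n ↦ u (T^[n] x)) atTop (𝓝 (u p)) ∧ u (T p) = u p := by
  have hup' : Tendsto (fun n ↦ u (T^[n] x)) atTop (𝓝 (u p)) :=
    (tendsto_iff_tendsto_subseq_of_antitone hanti hψ).2 (hup.tendsto.comp hlim)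
  refine ⟨hup', tendsto_nhds_unique (huTp.tendsto.comp (hT.tendsto.comp hlim)) ?_⟩
  refine (hup'.comp ((tendsto_add_atTop_nat 1).comp hψ)).congr fun k ↦ ?_
  simp only [Function.comp_apply, Function.iterate_succ_apply']

end Orbits

section InteriorFixedPoint

variable {f : ℂ → ℂ} {a : ℂ}

theorem antitone_norm_mobius_iterate (hf : DifferentiableOn ℂ f (ball 0 1))
    (hmaps : MapsTo f (ball 0 1) (ball 0 1)) (ha : ‖a‖ < 1) (hfa : f a = a) {z : ℂ}
    (hz : z ∈ ball (0 : ℂ) 1) : Antitone fun n ↦ ‖mobius a (f^[n] z)‖ :=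
  antitone_nat_of_succ_le fun n ↦ by
    simpa only [hfa, Function.iterate_succ_apply'] using
      norm_mobius_le_norm_mobius_of_mapsTo_ball hf hmaps ha
        (mem_ball_zero_iff.1 (hmaps.iterate n hz))

/- The orbit of `z` stays in the compact pseudohyperbolic disc of centre `a` through `z`. -/
theorem exists_tendsto_iterate_subseq_of_fixedPoint (hf : DifferentiableOn ℂ f (ball 0 1))
    (hmaps : MapsTo f (ball 0 1) (ball 0 1)) (ha : ‖a‖ < 1) (hfa : f a = a) {z : ℂ}
    (hz : z ∈ ball (0 : ℂ) 1) :
    ∃ p ∈ ball (0 : ℂ) 1, ∃ ψ : ℕ → ℕ, StrictMono ψ ∧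
      Tendsto (fun k ↦ f^[ψ k] z) atTop (𝓝 p) := by
  have hsub : closedBall (0 : ℂ) ‖mobius a z‖ ⊆ ball 0 1 :=
    closedBall_subset_ball (norm_mobius_lt_one ha (mem_ball_zero_iff.1 hz))
  have hcompact : IsCompact (mobius a '' closedBall 0 ‖mobius a z‖) :=
    (isCompact_closedBall _ _).image_of_continuousOn
      ((isDiscAlg_mobius ha).1.mono (hsub.trans ball_subset_closedBall))
  obtain ⟨p, ⟨q, hq, rfl⟩, ψ, hψ, hlim⟩ := hcompact.tendsto_subseq (x := fun n ↦ f^[n] z) fun n ↦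
    ⟨mobius a (f^[n] z), by
      simpa using antitone_norm_mobius_iterate hf hmaps ha hfa hz (Nat.zero_le n),
      mobius_mobius ha (mem_ball_zero_iff.1 (hmaps.iterate n hz)).le⟩
  exact ⟨mobius a q, mapsTo_mobius_ball ha (hsub hq), ψ, hψ, hlim⟩

theorem tendstoLocallyUniformlyOn_iterate_of_tendsto_norm_mobius
    (hf : DifferentiableOn ℂ f (ball 0 1)) (hmaps : MapsTo f (ball 0 1) (ball 0 1))
    (ha : ‖a‖ < 1) (hfa : f a = a)
    (hlim : ∀ z ∈ ball (0 : ℂ) 1, Tendsto (fun n ↦ ‖mobius a (f^[n] z)‖) atTop (𝓝 0)) :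
    TendstoLocallyUniformlyOn (fun n ↦ f^[n]) (fun _ ↦ a) atTop (ball 0 1) := by
  have hmobius : TendstoLocallyUniformlyOn (fun n z ↦ ‖mobius a (f^[n] z)‖) (fun _ ↦ (0 : ℝ))
      atTop (ball (0 : ℂ) 1) :=
    Antitone.tendstoLocallyUniformlyOn_of_forall_tendsto
      (fun n ↦ ((isDiscAlg_mobius ha).2.continuousOn.comp (hf.continuousOn.iterate hmaps n)
        (hmaps.iterate n)).norm)
      (fun z hz ↦ antitone_norm_mobius_iterate hf hmaps ha hfa hz) continuousOn_const hlim
  rw [Metric.tendstoLocallyUniformlyOn_iff] at hmobius ⊢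
  intro ε hε z hz
  obtain ⟨t, ht, hsmall⟩ := hmobius (ε / 2) (by positivity) z hz
  refine ⟨t ∩ ball 0 1, inter_mem ht self_mem_nhdsWithin, ?_⟩
  filter_upwards [hsmall] with n hn w hw
  have hdist := norm_sub_le_two_mul_norm_mobius ha (mem_ball_zero_iff.1 (hmaps.iterate n hw.2)).le
  have hlt : ‖mobius a (f^[n] w)‖ < ε / 2 := by simpa using hn w hw.1
  rw [dist_eq_norm]
  linarith

theorem exists_eqOn_diskRotation_or_tendstoLocallyUniformlyOn_iterate
    (hf : DifferentiableOn ℂ f (ball 0 1)) (hmaps : MapsTo f (ball 0 1) (ball 0 1))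
    (ha : ‖a‖ < 1) (hfa : f a = a) :
    (∃ l, ‖l‖ = 1 ∧ EqOn f (diskRotation a l) (ball 0 1)) ∨
      TendstoLocallyUniformlyOn (fun n ↦ f^[n]) (fun _ ↦ a) atTop (ball 0 1) := by
  refine or_iff_not_imp_left.2 fun hrot ↦
    tendstoLocallyUniformlyOn_iterate_of_tendsto_norm_mobius hf hmaps ha hfa fun z hz ↦ ?_
  obtain ⟨p, hp, ψ, hψ, hlim⟩ := exists_tendsto_iterate_subseq_of_fixedPoint hf hmaps ha hfa hz
  have hcont : ∀ w ∈ ball (0 : ℂ) 1, ContinuousAt (fun z ↦ ‖mobius a z‖) w := fun w hw ↦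
    ((isDiscAlg_mobius ha).2.continuousOn.continuousAt (isOpen_ball.mem_nhds hw)).norm
  obtain ⟨hlim', heq⟩ := tendsto_iterate_and_apply_eq_of_antitone
    (hf.continuousOn.continuousAt (isOpen_ball.mem_nhds hp)) (hcont p hp) (hcont _ (hmaps hp))
    (antitone_norm_mobius_iterate hf hmaps ha hfa hz) hψ.tendsto_atTop hlim
  have hpa : p = a := by
    by_contra hne
    exact hrot (exists_eqOn_diskRotation_of_norm_mobius_eq hf hmaps ha (mem_ball_zero_iff.1 hp)
      hfa hne heq)
  simpa [hpa] using hlim'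

end InteriorFixedPoint

section ScaledFixedPoints

open scoped ComplexConjugate

variable {f : ℂ → ℂ}

theorem mul_norm_one_sub_lt_norm_one_sub_sq_mul {r : ℝ} (hr₀ : 0 ≤ r) (hr₁ : r < 1) {w : ℂ}
    (hw : ‖w‖ < 1) : r * ‖1 - w‖ < ‖1 - (r : ℂ) ^ 2 * w‖ := by
  have hidentity : ‖1 - (r : ℂ) ^ 2 * w‖ ^ 2 - (r * ‖1 - w‖) ^ 2
      = (1 - r ^ 2) * (1 - r ^ 2 * ‖w‖ ^ 2) := by
    rw [mul_pow, ← ofReal_pow]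
    simp only [Complex.sq_norm, normSq_apply, sub_re, sub_im, re_ofReal_mul, im_ofReal_mul,
      one_re, one_im]
    ring
  have hr : r ^ 2 < 1 := pow_lt_one₀ hr₀ hr₁ two_ne_zero
  have hw' : r ^ 2 * ‖w‖ ^ 2 < 1 :=
    mul_lt_one_of_nonneg_of_lt_one_left (sq_nonneg r) hr (pow_le_one₀ (norm_nonneg w) hw.le)
  refine lt_of_pow_lt_pow_left₀ 2 (norm_nonneg _) (sub_pos.1 ?_)
  rw [hidentity]
  exact mul_pos (sub_pos.2 hr) (sub_pos.2 hw')

theorem norm_mobius_mul_lt {r : ℝ} (hr₀ : 0 ≤ r) (hr₁ : r < 1) {a b : ℂ} (ha : ‖a‖ < 1)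
    (hb : ‖b‖ < 1) (hab : a ≠ b) : ‖mobius (r * a) (r * b)‖ < ‖mobius a b‖ := by
  have hconj : ‖conj a * b‖ < 1 := by
    simpa using mul_lt_one_of_nonneg_of_lt_one_left (norm_nonneg a) ha hb.le
  have hlt := mul_norm_one_sub_lt_norm_one_sub_sq_mul hr₀ hr₁ hconj
  have hpos : 0 < ‖1 - conj a * b‖ := norm_pos_iff.2 (one_sub_conj_mul_ne_zero ha hb.le)
  have hrw : mobius (r * a) (r * b) = r * (a - b) / (1 - (r : ℂ) ^ 2 * (conj a * b)) := by
    rw [mobius, map_mul, conj_ofReal]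
    ring
  rw [hrw, mobius, norm_div, norm_div, norm_mul, norm_real, Real.norm_of_nonneg hr₀,
    div_lt_div_iff₀ ((mul_nonneg hr₀ hpos.le).trans_lt hlt) hpos, mul_comm r, mul_assoc]
  exact mul_lt_mul_of_pos_left hlt (norm_pos_iff.2 (sub_ne_zero.2 hab))

/- A point of least pseudohyperbolic displacement is fixed, since `r * f` strictly contracts the
pseudohyperbolic distance. -/
theorem exists_mul_apply_eq_self (hf : DifferentiableOn ℂ f (ball 0 1))
    (hmaps : MapsTo f (ball 0 1) (ball 0 1)) {r : ℝ} (hr₀ : 0 ≤ r) (hr₁ : r < 1) :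
    ∃ z : ℂ, ‖z‖ < 1 ∧ r * f z = z := by
  have hsub : closedBall (0 : ℂ) r ⊆ ball 0 1 := closedBall_subset_ball hr₁
  have hnorm : ∀ z ∈ closedBall (0 : ℂ) r, r * f z ∈ closedBall (0 : ℂ) r := fun z hz ↦ by
    have hfz : ‖f z‖ < 1 := by simpa using hmaps (hsub hz)
    rw [mem_closedBall_zero_iff, norm_mul, norm_real, Real.norm_of_nonneg hr₀]
    exact mul_le_of_le_one_right hr₀ hfz.le
  have hfcont : ContinuousOn f (closedBall 0 r) := hf.continuousOn.mono hsub
  have hcont : ContinuousOn (fun z ↦ ‖mobius z (r * f z)‖) (closedBall 0 r) :=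
    (ContinuousOn.div (by fun_prop) (by fun_prop) fun z hz ↦
      one_sub_conj_mul_ne_zero (by simpa using hsub hz)
        (mem_ball_zero_iff.1 (hsub (hnorm z hz))).le).norm
  obtain ⟨z, hz, hmin⟩ := (isCompact_closedBall (0 : ℂ) r).exists_isMinOn
    (nonempty_closedBall.2 hr₀) hcont
  have hz₁ : ‖z‖ < 1 := by simpa using hsub hz
  refine ⟨z, hz₁, by_contra fun hne ↦ ?_⟩
  have hw := hnorm z hz
  have hw₁ : ‖r * f z‖ < 1 := by simpa using hsub hw
  have hfne : f z ≠ f (r * f z) := fun h ↦ by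
    have hle : ‖mobius z (r * f z)‖ ≤ ‖mobius (r * f z) (r * f (r * f z))‖ := hmin hw
    rw [← h, mobius_self, norm_zero, norm_le_zero_iff, mobius_eq_zero_iff hz₁ hw₁.le] at hle
    exact hne hle
  have hlt := calc
    ‖mobius (r * f z) (r * f (r * f z))‖ < ‖mobius (f z) (f (r * f z))‖ :=
      norm_mobius_mul_lt hr₀ hr₁ (by simpa using hmaps (hsub hz))
        (by simpa using hmaps (hsub hw)) hfne
    _ ≤ ‖mobius z (r * f z)‖ := norm_mobius_le_norm_mobius_of_mapsTo_ball hf hmaps hz₁ hw₁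
  exact hlt.not_ge (hmin hw)

theorem exists_tendsto_fixedPoints_mul (hf : DifferentiableOn ℂ f (ball 0 1))
    (hmaps : MapsTo f (ball 0 1) (ball 0 1)) (hfix : ∀ z ∈ ball (0 : ℂ) 1, f z ≠ z) :
    ∃ z₀ : ℂ, ‖z₀‖ = 1 ∧ ∃ (r : ℕ → ℝ) (x : ℕ → ℂ), (∀ n, r n ∈ Ioo 0 1) ∧ (∀ n, ‖x n‖ < 1) ∧
      (∀ n, r n * f (x n) = x n) ∧ Tendsto r atTop (𝓝 1) ∧ Tendsto x atTop (𝓝 z₀) := by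
  obtain ⟨r, -, hr, hr1⟩ := exists_seq_strictMono_tendsto' (zero_lt_one (α := ℝ))
  choose x hx₁ hx using fun n ↦ exists_mul_apply_eq_self hf hmaps (hr n).1.le (hr n).2
  obtain ⟨z₀, hz₀, ψ, hψ, hlim⟩ := (isCompact_closedBall (0 : ℂ) 1).tendsto_subseq
    fun n ↦ mem_closedBall_zero_iff.2 (hx₁ n).le
  have hrψ : Tendsto (r ∘ ψ) atTop (𝓝 1) := hr1.comp hψ.tendsto_atTop
  refine ⟨z₀, ?_, r ∘ ψ, x ∘ ψ, fun k ↦ hr _, fun k ↦ hx₁ _, fun k ↦ hx _, hrψ, hlim⟩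
  refine (mem_closedBall_zero_iff.1 hz₀).eq_of_not_lt fun hlt ↦ ?_
  have hz₀' : z₀ ∈ ball (0 : ℂ) 1 := mem_ball_zero_iff.2 hlt
  have hfx := (hf.continuousOn.continuousAt (isOpen_ball.mem_nhds hz₀')).tendsto.comp hlim
  refine hfix z₀ hz₀' (tendsto_nhds_unique ?_ hlim)
  have hmul := ((continuous_ofReal.tendsto 1).comp hrψ).mul hfx
  rw [ofReal_one, one_mul] at hmul
  exact hmul.congr fun k ↦ hx (ψ k)

end ScaledFixedPoints

section Wolff

open scoped ComplexConjugate

variable {f : ℂ → ℂ} {z₀ : ℂ}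

/- This is Schwarz–Pick after clearing the denominators of
`1 - ‖mobius a z‖ ^ 2 = (1 - ‖a‖ ^ 2) * (1 - ‖z‖ ^ 2) / ‖1 - conj a * z‖ ^ 2`. -/
theorem mul_norm_one_sub_conj_mul_sq_le_of_mapsTo_ball (hf : DifferentiableOn ℂ f (ball 0 1))
    (hmaps : MapsTo f (ball 0 1) (ball 0 1)) {a z : ℂ} (ha : ‖a‖ < 1) (hz : ‖z‖ < 1) :
    (1 - ‖a‖ ^ 2) * (1 - ‖z‖ ^ 2) * ‖1 - conj (f a) * f z‖ ^ 2 ≤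
      (1 - ‖f a‖ ^ 2) * (1 - ‖f z‖ ^ 2) * ‖1 - conj a * z‖ ^ 2 := by
  have hfa : ‖f a‖ < 1 := by simpa using hmaps (mem_ball_zero_iff.2 ha)
  have hfz : ‖f z‖ < 1 := by simpa using hmaps (mem_ball_zero_iff.2 hz)
  have hpick := pow_le_pow_left₀ (norm_nonneg _)
    (norm_mobius_le_norm_mobius_of_mapsTo_ball hf hmaps ha hz) 2
  have hden : 0 < ‖1 - conj a * z‖ ^ 2 :=
    pow_pos (norm_pos_iff.2 (one_sub_conj_mul_ne_zero ha hz.le)) 2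
  have hfden : 0 < ‖1 - conj (f a) * f z‖ ^ 2 :=
    pow_pos (norm_pos_iff.2 (one_sub_conj_mul_ne_zero hfa hfz.le)) 2
  rw [mobius, mobius, norm_div, norm_div, div_pow, div_pow, div_le_div_iff₀ hfden hden] at hpick
  rw [← norm_one_sub_conj_mul_sq_sub_norm_sub_sq, ← norm_one_sub_conj_mul_sq_sub_norm_sub_sq]
  linarith

theorem norm_one_sub_conj_mul_of_norm_eq_one (hz₀ : ‖z₀‖ = 1) (z : ℂ) :
    ‖1 - conj z₀ * z‖ = ‖z₀ - z‖ := by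
  rw [← sq_eq_sq₀ (norm_nonneg _) (norm_nonneg _), ← sub_eq_zero,
    norm_one_sub_conj_mul_sq_sub_norm_sub_sq, hz₀]
  ring

theorem sub_ne_zero_of_mem_ball (hz₀ : ‖z₀‖ = 1) {z : ℂ} (hz : z ∈ ball (0 : ℂ) 1) :
    z₀ - z ≠ 0 :=
  sub_ne_zero.2 fun h ↦ (mem_ball_zero_iff.1 hz).ne (h ▸ hz₀)

theorem poissonKernel_le_poissonKernel_iff (hz₀ : ‖z₀‖ = 1) {z w : ℂ}
    (hz : z ∈ ball (0 : ℂ) 1) (hw : w ∈ ball (0 : ℂ) 1) :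
    poissonKernel 0 z z₀ ≤ poissonKernel 0 w z₀ ↔
    (1 - ‖z‖ ^ 2) * ‖z₀ - w‖ ^ 2 ≤ (1 - ‖w‖ ^ 2) * ‖z₀ - z‖ ^ 2 := by
  have hpos : ∀ v ∈ ball (0 : ℂ) 1, 0 < ‖z₀ - v‖ ^ 2 := fun v hv ↦
    pow_pos (norm_pos_iff.2 (sub_ne_zero_of_mem_ball hz₀ hv)) 2
  simp only [poissonKernel, sub_zero, hz₀, one_pow]
  exact div_le_div_iff₀ (hpos z hz) (hpos w hw)

theorem exists_forall_poissonKernel_le_poissonKernel (hf : DifferentiableOn ℂ f (ball 0 1))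
    (hmaps : MapsTo f (ball 0 1) (ball 0 1)) (hfix : ∀ z ∈ ball (0 : ℂ) 1, f z ≠ z) :
    ∃ z₀ : ℂ, ‖z₀‖ = 1 ∧
      ∀ z ∈ ball (0 : ℂ) 1, poissonKernel 0 z z₀ ≤ poissonKernel 0 (f z) z₀ := by
  obtain ⟨z₀, hz₀, r, x, hr, hx₁, hx, hrlim, hxlim⟩ :=
    exists_tendsto_fixedPoints_mul hf hmaps hfix
  refine ⟨z₀, hz₀, fun z hz ↦ ?_⟩
  have hz₁ : ‖z‖ < 1 := mem_ball_zero_iff.1 hz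
  rw [poissonKernel_le_poissonKernel_iff hz₀ hz (hmaps hz),
    ← norm_one_sub_conj_mul_of_norm_eq_one hz₀, ← norm_one_sub_conj_mul_of_norm_eq_one hz₀]
  have hpick : ∀ n, (1 - ‖z‖ ^ 2) * ‖1 - conj (x n) * (r n * f z)‖ ^ 2 ≤
      (1 - ‖r n * f z‖ ^ 2) * ‖1 - conj (x n) * z‖ ^ 2 := fun n ↦ by
    have hscaled := mul_norm_one_sub_conj_mul_sq_le_of_mapsTo_ball (hf.const_mul (r n : ℂ))
      (fun w hw ↦ by
        have hfw : ‖f w‖ < 1 := by simpa using hmaps hw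
        rw [mem_ball_zero_iff, norm_mul, norm_real, Real.norm_of_nonneg (hr n).1.le]
        exact mul_lt_one_of_nonneg_of_lt_one_left (hr n).1.le (hr n).2 hfw.le) (hx₁ n) hz₁
    rw [hx, mul_assoc, mul_assoc] at hscaled
    exact le_of_mul_le_mul_left hscaled
      (sub_pos.2 (pow_lt_one₀ (norm_nonneg _) (hx₁ n) two_ne_zero))
  have hconj := (continuous_conj.tendsto z₀).comp hxlim
  have hmul := (((continuous_ofReal.tendsto 1).comp hrlim).mul_const (f z))
  rw [ofReal_one, one_mul] at hmul
  exact le_of_tendsto_of_tendsto'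
    (((tendsto_const_nhds.sub (hconj.mul hmul)).norm.pow 2).const_mul _)
    ((tendsto_const_nhds.sub (hmul.norm.pow 2)).mul
      ((tendsto_const_nhds.sub (hconj.mul_const z)).norm.pow 2)) hpick

end Wolff

section BoundaryEscape

variable {f : ℂ → ℂ} {z₀ : ℂ}

theorem eqOn_of_isMinOn_re {D : ℂ → ℂ} {U : Set ℂ} {p : ℂ} (hU : IsOpen U)
    (hconn : IsPreconnected U) (hD : DifferentiableOn ℂ D U) (hp : p ∈ U)
    (hmin : IsMinOn (fun z ↦ (D z).re) U p) : EqOn D (fun _ ↦ D p) U := by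
  rcases (hD.analyticOnNhd hU).is_constant_or_isOpen hconn with ⟨w, hw⟩ | hopen
  · exact fun z hz ↦ (hw z hz).trans (hw p hp).symm
  · have hsub : D '' U ⊆ {w | (D p).re ≤ w.re} := image_subset_iff.2 hmin
    have hinterior := interior_maximal hsub (hopen U subset_rfl hU) (mem_image_of_mem D hp)
    rw [interior_setOfPred_le_re] at hinterior
    exact absurd hinterior (lt_irrefl (D p).re)

theorem differentiableOn_herglotzRieszKernel (hz₀ : ‖z₀‖ = 1) :
    DifferentiableOn ℂ (fun z ↦ herglotzRieszKernel 0 z z₀) (ball 0 1) := by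
  simp only [herglotzRieszKernel, sub_zero]
  exact .div (by fun_prop) (by fun_prop) fun z hz ↦ sub_ne_zero_of_mem_ball hz₀ hz

theorem injOn_herglotzRieszKernel (hz₀ : ‖z₀‖ = 1) :
    InjOn (fun z ↦ herglotzRieszKernel 0 z z₀) (ball 0 1) := by
  intro z hz w hw heq
  simp only [herglotzRieszKernel, sub_zero] at heq
  rw [div_eq_div_iff (sub_ne_zero_of_mem_ball hz₀ hz) (sub_ne_zero_of_mem_ball hz₀ hw)] at heq
  have hne : z₀ ≠ 0 := norm_ne_zero_iff.1 (by simp [hz₀])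
  refine mul_left_cancel₀ hne ?_
  linear_combination heq / 2

/- `herglotzRieszKernel 0 · z₀` carries the disc to the right half-plane and `z₀` to `∞`; there a
self-map that does not decrease real parts, and preserves one of them, is a translation. -/
theorem exists_herglotzRieszKernel_eq_add (hf : DifferentiableOn ℂ f (ball 0 1))
    (hmaps : MapsTo f (ball 0 1) (ball 0 1)) (hz₀ : ‖z₀‖ = 1)
    (hpoisson : ∀ z ∈ ball (0 : ℂ) 1, poissonKernel 0 z z₀ ≤ poissonKernel 0 (f z) z₀)
    {p : ℂ} (hp : p ∈ ball (0 : ℂ) 1) (heq : poissonKernel 0 (f p) z₀ = poissonKernel 0 p z₀) :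
    ∃ c, ∀ z ∈ ball (0 : ℂ) 1, herglotzRieszKernel 0 (f z) z₀ = herglotzRieszKernel 0 z z₀ + c := by
  simp only [poissonKernel_eq_re_herglotzRieszKernel, Function.comp_apply] at hpoisson heq
  have hH := differentiableOn_herglotzRieszKernel hz₀
  have hconst := eqOn_of_isMinOn_re isOpen_ball (convex_ball (0 : ℂ) 1).isPreconnected
    ((hH.comp hf hmaps).sub hH) hp fun z hz ↦ by
      simp only [mem_ofPred_eq, Pi.sub_apply, Function.comp_apply, sub_re, heq, sub_self,
        sub_nonneg]
      exact hpoisson z hz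
  exact ⟨_, fun z hz ↦ sub_eq_iff_eq_add'.1 (hconst hz)⟩

theorem not_tendsto_iterate_subseq_of_herglotzRieszKernel_eq_add
    (hmaps : MapsTo f (ball 0 1) (ball 0 1)) (hz₀ : ‖z₀‖ = 1) {c : ℂ} (hc₀ : c ≠ 0)
    (hc : ∀ z ∈ ball (0 : ℂ) 1, herglotzRieszKernel 0 (f z) z₀ = herglotzRieszKernel 0 z z₀ + c)
    {z p : ℂ} (hz : z ∈ ball (0 : ℂ) 1) (hp : p ∈ ball (0 : ℂ) 1) {ψ : ℕ → ℕ}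
    (hψ : Tendsto ψ atTop atTop) : ¬ Tendsto (fun k ↦ f^[ψ k] z) atTop (𝓝 p) := by
  intro hlim
  set H : ℂ → ℂ := fun w ↦ herglotzRieszKernel 0 w z₀
  have hiterate : ∀ n : ℕ, H (f^[n] z) - H z = n * c := fun n ↦ by
    induction n with
    | zero => simp
    | succ n ih =>
      have hstep : H (f^[n + 1] z) = H (f^[n] z) + c := by
        rw [Function.iterate_succ_apply']
        exact hc _ (hmaps.iterate n hz)
      rw [hstep, Nat.cast_succ]
      linear_combination ih
  have hH : ContinuousAt H p := (differentiableOn_herglotzRieszKernel hz₀).continuousOn.continuousAt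
    (isOpen_ball.mem_nhds hp)
  have hconv : Tendsto (fun k ↦ ‖H (f^[ψ k] z) - H z‖) atTop (𝓝 ‖H p - H z‖) :=
    ((hH.tendsto.comp hlim).sub_const _).norm
  have hdiv : Tendsto (fun k ↦ ‖H (f^[ψ k] z) - H z‖) atTop atTop := by
    simp only [hiterate, norm_mul, Complex.norm_natCast]
    exact (tendsto_natCast_atTop_atTop.comp hψ).atTop_mul_const (norm_pos_iff.2 hc₀)
  exact not_tendsto_nhds_of_tendsto_atTop hdiv _ hconv

theorem not_tendsto_iterate_subseq_of_poissonKernel_le (hf : DifferentiableOn ℂ f (ball 0 1))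
    (hmaps : MapsTo f (ball 0 1) (ball 0 1)) (hfix : ∀ z ∈ ball (0 : ℂ) 1, f z ≠ z)
    (hz₀ : ‖z₀‖ = 1)
    (hpoisson : ∀ z ∈ ball (0 : ℂ) 1, poissonKernel 0 z z₀ ≤ poissonKernel 0 (f z) z₀)
    {z p : ℂ} (hz : z ∈ ball (0 : ℂ) 1) (hp : p ∈ ball (0 : ℂ) 1) {ψ : ℕ → ℕ}
    (hψ : Tendsto ψ atTop atTop) : ¬ Tendsto (fun k ↦ f^[ψ k] z) atTop (𝓝 p) := by
  intro hlim
  have hcont : ∀ w ∈ ball (0 : ℂ) 1, ContinuousAt (fun w ↦ -poissonKernel 0 w z₀) w := fun w hw ↦ by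
    simp only [poissonKernel_eq_re_herglotzRieszKernel]
    exact (continuous_re.continuousAt.comp
      ((differentiableOn_herglotzRieszKernel hz₀).continuousOn.continuousAt
        (isOpen_ball.mem_nhds hw))).neg
  have hanti : Antitone fun n ↦ -poissonKernel 0 (f^[n] z) z₀ := antitone_nat_of_succ_le fun n ↦ by
    simpa only [Function.iterate_succ_apply', neg_le_neg_iff] using
      hpoisson _ (hmaps.iterate n hz)
  have heq := neg_inj.1 (tendsto_iterate_and_apply_eq_of_antitone
    (hf.continuousOn.continuousAt (isOpen_ball.mem_nhds hp)) (hcont p hp) (hcont _ (hmaps hp))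
    hanti hψ hlim).2
  obtain ⟨c, hc⟩ := exists_herglotzRieszKernel_eq_add hf hmaps hz₀ hpoisson hp heq
  have hc₀ : c ≠ 0 := fun h ↦ hfix p hp <| injOn_herglotzRieszKernel hz₀ (hmaps hp) hp <| by
    simpa only [h, add_zero] using hc p hp
  exact not_tendsto_iterate_subseq_of_herglotzRieszKernel_eq_add hmaps hz₀ hc₀ hc hz hp hψ hlim

theorem tendsto_norm_of_forall_not_tendsto_subseq {E : Type*} [NormedAddCommGroup E]
    [ProperSpace E] {R : ℝ} {x : ℕ → E} (hx : ∀ n, ‖x n‖ < R)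
    (hno : ∀ p ∈ ball (0 : E) R, ∀ ψ : ℕ → ℕ, StrictMono ψ →
      ¬ Tendsto (fun k ↦ x (ψ k)) atTop (𝓝 p)) : Tendsto (fun n ↦ ‖x n‖) atTop (𝓝 R) := by
  refine tendsto_order.2 ⟨fun c hc ↦ ?_, fun c hc ↦ .of_forall fun n ↦ (hx n).trans hc⟩
  by_contra hfreq
  obtain ⟨p, hp, ψ, hψ, hlim⟩ := (isCompact_closedBall (0 : E) c).tendsto_subseq' (x := x)
    ((not_eventually.1 hfreq).mono fun n hn ↦ mem_closedBall_zero_iff.2 (not_lt.1 hn))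
  exact hno p (closedBall_subset_ball hc hp) ψ hψ hlim

theorem tendsto_norm_iterate_of_poissonKernel_le (hf : DifferentiableOn ℂ f (ball 0 1))
    (hmaps : MapsTo f (ball 0 1) (ball 0 1)) (hfix : ∀ z ∈ ball (0 : ℂ) 1, f z ≠ z)
    (hz₀ : ‖z₀‖ = 1)
    (hpoisson : ∀ z ∈ ball (0 : ℂ) 1, poissonKernel 0 z z₀ ≤ poissonKernel 0 (f z) z₀)
    {z : ℂ} (hz : z ∈ ball (0 : ℂ) 1) : Tendsto (fun n ↦ ‖f^[n] z‖) atTop (𝓝 1) :=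
  tendsto_norm_of_forall_not_tendsto_subseq (fun n ↦ mem_ball_zero_iff.1 (hmaps.iterate n hz))
    fun _ hp _ hψ ↦ not_tendsto_iterate_subseq_of_poissonKernel_le hf hmaps hfix hz₀ hpoisson hz hp
      hψ.tendsto_atTop

end BoundaryEscape

section BoundaryConvergence

open scoped ComplexConjugate

variable {f : ℂ → ℂ} {z₀ : ℂ}

theorem one_sub_norm_sq_mul_one_sub_norm_sq_le (hf : DifferentiableOn ℂ f (ball 0 1))
    (hmaps : MapsTo f (ball 0 1) (ball 0 1)) {z : ℂ} (hz : ‖z‖ < 1) :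
    (1 - ‖z‖ ^ 2) * (1 - ‖f z‖ ^ 2) ≤ 4 * (1 - ‖f 0‖ ^ 2) := by
  have hf₀ : ‖f 0‖ < 1 := by simpa using hmaps (mem_ball_self one_pos)
  have hfz : ‖f z‖ < 1 := by simpa using hmaps (mem_ball_zero_iff.2 hz)
  have hz' : 0 < 1 - ‖z‖ ^ 2 := by simpa using hz
  have hfz' : 0 < 1 - ‖f z‖ ^ 2 := by simpa using hfz
  have hpick : (1 - ‖z‖ ^ 2) * ‖1 - conj (f 0) * f z‖ ^ 2
      ≤ (1 - ‖f 0‖ ^ 2) * (1 - ‖f z‖ ^ 2) := by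
    simpa using mul_norm_one_sub_conj_mul_sq_le_of_mapsTo_ball hf hmaps (a := 0) (by simp) hz
  have hden : (1 - ‖f z‖ ^ 2) / 2 ≤ ‖1 - conj (f 0) * f z‖ := by
    have htriangle : 1 - ‖f 0‖ * ‖f z‖ ≤ ‖1 - conj (f 0) * f z‖ := by
      simpa using norm_sub_norm_le 1 (conj (f 0) * f z)
    have hmul : ‖f 0‖ * ‖f z‖ ≤ ‖f z‖ := mul_le_of_le_one_left (norm_nonneg _) hf₀.le
    linarith [sq_nonneg (1 - ‖f z‖)]
  refine le_of_mul_le_mul_right ?_ hfz'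
  calc (1 - ‖z‖ ^ 2) * (1 - ‖f z‖ ^ 2) * (1 - ‖f z‖ ^ 2)
      = 4 * ((1 - ‖z‖ ^ 2) * ((1 - ‖f z‖ ^ 2) / 2) ^ 2) := by ring
    _ ≤ 4 * ((1 - ‖z‖ ^ 2) * ‖1 - conj (f 0) * f z‖ ^ 2) := by gcongr
    _ ≤ 4 * (1 - ‖f 0‖ ^ 2) * (1 - ‖f z‖ ^ 2) := by linarith

theorem one_sub_norm_sq_mul_norm_sub_sq_le (hz₀ : ‖z₀‖ = 1) {z w : ℂ}
    (hz : z ∈ ball (0 : ℂ) 1) (hw : w ∈ ball (0 : ℂ) 1)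
    (hle : poissonKernel 0 z z₀ ≤ poissonKernel 0 w z₀) :
    (1 - ‖z‖ ^ 2) * ‖z₀ - w‖ ^ 2 ≤ 4 * (1 - ‖w‖ ^ 2) := by
  have hw' : 0 ≤ 1 - ‖w‖ ^ 2 := by simpa using (mem_ball_zero_iff.1 hw).le
  have hdist : ‖z₀ - z‖ ≤ 2 := by
    linarith [norm_sub_le z₀ z, mem_ball_zero_iff.1 hz]
  calc (1 - ‖z‖ ^ 2) * ‖z₀ - w‖ ^ 2 ≤ (1 - ‖w‖ ^ 2) * ‖z₀ - z‖ ^ 2 :=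
        (poissonKernel_le_poissonKernel_iff hz₀ hz hw).1 hle
    _ ≤ (1 - ‖w‖ ^ 2) * 2 ^ 2 := by gcongr
    _ = 4 * (1 - ‖w‖ ^ 2) := by ring

theorem norm_sub_iterate_sq_le (hf : DifferentiableOn ℂ f (ball 0 1))
    (hmaps : MapsTo f (ball 0 1) (ball 0 1)) (hz₀ : ‖z₀‖ = 1)
    (hpoisson : ∀ z ∈ ball (0 : ℂ) 1, poissonKernel 0 z z₀ ≤ poissonKernel 0 (f z) z₀)
    (n : ℕ) {z : ℂ} (hz : z ∈ ball (0 : ℂ) 1) :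
    (1 - ‖z‖ ^ 2) ^ 2 * ‖z₀ - f^[n] z‖ ^ 2 ≤ 16 * (1 - ‖f^[n] 0‖ ^ 2) := by
  have hmono : Monotone fun n ↦ poissonKernel 0 (f^[n] z) z₀ := monotone_nat_of_le_succ fun n ↦ by
    simpa only [Function.iterate_succ_apply'] using hpoisson _ (hmaps.iterate n hz)
  have hle : poissonKernel 0 z z₀ ≤ poissonKernel 0 (f^[n] z) z₀ := by
    simpa only [Function.iterate_zero, id_eq] using hmono (zero_le (a := n))
  have hpick : (1 - ‖z‖ ^ 2) * (1 - ‖f^[n] z‖ ^ 2) ≤ 4 * (1 - ‖f^[n] 0‖ ^ 2) :=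
    one_sub_norm_sq_mul_one_sub_norm_sq_le (f := f^[n]) (hf.iterate hmaps n) (hmaps.iterate n)
      (mem_ball_zero_iff.1 hz)
  have hdist : (1 - ‖z‖ ^ 2) * ‖z₀ - f^[n] z‖ ^ 2 ≤ 4 * (1 - ‖f^[n] z‖ ^ 2) :=
    one_sub_norm_sq_mul_norm_sub_sq_le hz₀ hz (hmaps.iterate n hz) hle
  generalize f^[n] z = w at hpick hdist ⊢
  have hz' : 0 ≤ 1 - ‖z‖ ^ 2 := by simpa using (mem_ball_zero_iff.1 hz).le
  calc (1 - ‖z‖ ^ 2) ^ 2 * ‖z₀ - w‖ ^ 2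
      = (1 - ‖z‖ ^ 2) * ((1 - ‖z‖ ^ 2) * ‖z₀ - w‖ ^ 2) := by ring
    _ ≤ (1 - ‖z‖ ^ 2) * (4 * (1 - ‖w‖ ^ 2)) := by gcongr
    _ ≤ 16 * (1 - ‖f^[n] 0‖ ^ 2) := by linarith

theorem exists_tendstoLocallyUniformlyOn_iterate_of_forall_ne
    (hf : DifferentiableOn ℂ f (ball 0 1)) (hmaps : MapsTo f (ball 0 1) (ball 0 1))
    (hfix : ∀ z ∈ ball (0 : ℂ) 1, f z ≠ z) :
    ∃ z₀ : ℂ, ‖z₀‖ = 1 ∧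
      TendstoLocallyUniformlyOn (fun n ↦ f^[n]) (fun _ ↦ z₀) atTop (ball 0 1) := by
  obtain ⟨z₀, hz₀, hpoisson⟩ := exists_forall_poissonKernel_le_poissonKernel hf hmaps hfix
  refine ⟨z₀, hz₀, Metric.tendstoLocallyUniformlyOn_iff.2 fun ε hε z hz ↦ ?_⟩
  obtain ⟨R, hzR, hR⟩ := exists_between (mem_ball_zero_iff.1 hz)
  have hR' : 0 < 1 - R ^ 2 := sub_pos.2 (pow_lt_one₀ ((norm_nonneg z).trans hzR.le) hR two_ne_zero)
  have hnorm : Tendsto (fun n ↦ 16 * (1 - ‖f^[n] 0‖ ^ 2)) atTop (𝓝 0) := by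
    simpa using (((tendsto_norm_iterate_of_poissonKernel_le hf hmaps hfix hz₀ hpoisson
      (mem_ball_self one_pos)).pow 2).const_sub 1).const_mul 16
  refine ⟨ball 0 R, mem_nhdsWithin_of_mem_nhds (isOpen_ball.mem_nhds (by simpa using hzR)), ?_⟩
  filter_upwards [hnorm.eventually_lt_const
    (show 0 < (1 - R ^ 2) ^ 2 * ε ^ 2 by positivity)] with n hn w hw
  have hwR : ‖w‖ < R := mem_ball_zero_iff.1 hw
  rw [dist_eq_norm]
  refine lt_of_pow_lt_pow_left₀ 2 hε.le (lt_of_mul_lt_mul_left ?_ (sq_nonneg (1 - R ^ 2)))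
  calc (1 - R ^ 2) ^ 2 * ‖z₀ - f^[n] w‖ ^ 2 ≤ (1 - ‖w‖ ^ 2) ^ 2 * ‖z₀ - f^[n] w‖ ^ 2 := by gcongr
    _ ≤ 16 * (1 - ‖f^[n] 0‖ ^ 2) :=
        norm_sub_iterate_sq_le hf hmaps hz₀ hpoisson n (ball_subset_ball hR.le hw)
    _ < (1 - R ^ 2) ^ 2 * ε ^ 2 := hn

theorem exists_eqOn_diskRotation_or_exists_tendstoLocallyUniformlyOn_iterate
    (hf : DifferentiableOn ℂ f (ball 0 1)) (hmaps : MapsTo f (ball 0 1) (ball 0 1))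
    (hnoint : ¬ ∃ z₀ ∈ ball (0 : ℂ) 1,
      TendstoLocallyUniformlyOn (fun n ↦ f^[n]) (fun _ ↦ z₀) atTop (ball 0 1)) :
    (∃ a l, ‖a‖ < 1 ∧ ‖l‖ = 1 ∧ EqOn f (diskRotation a l) (ball 0 1)) ∨
      (∀ z ∈ ball (0 : ℂ) 1, f z ≠ z) ∧ ∃ z₀ : ℂ, ‖z₀‖ = 1 ∧
        TendstoLocallyUniformlyOn (fun n ↦ f^[n]) (fun _ ↦ z₀) atTop (ball 0 1) := by
  by_cases hfix : ∀ z ∈ ball (0 : ℂ) 1, f z ≠ z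
  · exact .inr ⟨hfix, exists_tendstoLocallyUniformlyOn_iterate_of_forall_ne hf hmaps hfix⟩
  · push Not at hfix
    obtain ⟨a, ha, hfa⟩ := hfix
    rcases exists_eqOn_diskRotation_or_tendstoLocallyUniformlyOn_iterate hf hmaps
      (mem_ball_zero_iff.1 ha) hfa with ⟨l, hl, hrot⟩ | hlim
    · exact .inl ⟨a, l, mem_ball_zero_iff.1 ha, hl, hrot⟩
    · exact absurd ⟨a, ha, hlim⟩ hnoint

end BoundaryConvergence

section DiscAlgebra

variable {f g : ℂ → ℂ}

theorem IsDiscAlg.eqOn_closedBall (hf : IsDiscAlg f) (hg : IsDiscAlg g)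
    (h : EqOn f g (ball 0 1)) : EqOn f g (closedBall 0 1) :=
  h.of_subset_closure hf.1 hg.1 ball_subset_closedBall (closure_ball (0 : ℂ) one_ne_zero).ge

theorem IsDiscAlg.pow (hf : IsDiscAlg f) (n : ℕ) : IsDiscAlg fun z ↦ f z ^ n :=
  ⟨hf.1.pow n, hf.2.pow n⟩

theorem exists_polynomial_norm_sub_le_of_differentiableOn_ball {R r ε : ℝ}
    (hf : DifferentiableOn ℂ f (ball 0 R)) (hr : 0 ≤ r) (hrR : r < R) (hε : 0 < ε) :
    ∃ p : Polynomial ℂ, ∀ z ∈ closedBall (0 : ℂ) r, ‖f z - p.eval z‖ ≤ ε := by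
  obtain ⟨s, hrs, hsR⟩ := exists_between hrR
  obtain ⟨t, hst, htR⟩ := exists_between hsR
  lift s to NNReal using hr.trans hrs.le
  lift t to NNReal using s.2.trans hst.le
  have hseries := (hf.mono (closedBall_subset_ball htR)).hasFPowerSeriesOnBall
    (s.2.trans_lt hst)
  obtain ⟨d, hd⟩ := (Metric.tendstoUniformlyOn_iff.1
    (hseries.tendstoUniformlyOn (r' := s) (by exact_mod_cast hst)) ε hε).exists
  refine ⟨∑ k ∈ Finset.range d, .monomial k ((cauchyPowerSeries f 0 t).coeff k), fun z hz ↦ ?_⟩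
  have hzs := hd z (closedBall_subset_ball hrs hz)
  rw [zero_add, dist_eq_norm] at hzs
  simpa [FormalMultilinearSeries.partialSum, FormalMultilinearSeries.apply_eq_pow_smul_coeff,
    Polynomial.eval_finsetSum, mul_comm] using hzs.le

theorem exists_norm_sub_dilate_le (hf : ContinuousOn f (closedBall 0 1)) {ε : ℝ} (hε : 0 < ε) :
    ∃ r ∈ Ioo (0 : ℝ) 1, ∀ z ∈ closedBall (0 : ℂ) 1, ‖f z - f (r * z)‖ ≤ ε := by
  obtain ⟨δ, hδ, hfδ⟩ := Metric.uniformContinuousOn_iff.1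
    ((isCompact_closedBall (0 : ℂ) 1).uniformContinuousOn_of_continuous hf) ε hε
  obtain ⟨r, hr, hr1⟩ := exists_between (max_lt one_pos (sub_lt_self 1 hδ))
  obtain ⟨hr0, hrδ⟩ := max_lt_iff.1 hr
  refine ⟨r, ⟨hr0, hr1⟩, fun z hz ↦ ?_⟩
  have hz1 := mem_closedBall_zero_iff.1 hz
  have hrz : r * z ∈ closedBall (0 : ℂ) 1 := by
    simpa [abs_of_pos hr0] using mul_le_one₀ hr1.le (norm_nonneg z) hz1
  have hdist : dist z (r * z) < δ := by
    calc dist z (r * z) = (1 - r) * ‖z‖ := by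
          rw [dist_eq_norm, ← one_sub_mul, norm_mul, ← ofReal_one, ← ofReal_sub,
            Complex.norm_of_nonneg (sub_nonneg.2 hr1.le)]
      _ ≤ 1 - r := mul_le_of_le_one_right (sub_nonneg.2 hr1.le) hz1
      _ < δ := by linarith
  exact (dist_eq_norm (f z) (f (r * z)) ▸ hfδ z hz _ hrz hdist).le

theorem IsDiscAlg.exists_polynomial_norm_sub_le (hf : IsDiscAlg f) {ε : ℝ} (hε : 0 < ε) :
    ∃ p : Polynomial ℂ, ∀ z ∈ closedBall (0 : ℂ) 1, ‖f z - p.eval z‖ ≤ ε := by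
  obtain ⟨r, ⟨hr0, hr1⟩, hr⟩ := exists_norm_sub_dilate_le hf.1 (half_pos hε)
  obtain ⟨p, hp⟩ :=
    exists_polynomial_norm_sub_le_of_differentiableOn_ball hf.2 hr0.le hr1 (half_pos hε)
  refine ⟨p.comp (.C (r : ℂ) * .X), fun z hz ↦ ?_⟩
  have hrz : r * z ∈ closedBall (0 : ℂ) r := by
    simpa [abs_of_pos hr0] using mul_le_of_le_one_right hr0.le (mem_closedBall_zero_iff.1 hz)
  simpa using (norm_sub_le_norm_sub_add_norm_sub _ (f (r * z)) _).trans
    (add_le_add (hr z hz) (hp _ hrz))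

end DiscAlgebra

section CesaroMeans

variable {φ f g : ℂ → ℂ}

theorem cesaro_eq_birkhoffAverage (φ f : ℂ → ℂ) (n : ℕ) (z : ℂ) :
    cesaro φ f n z = birkhoffAverage ℝ φ f n (φ z) := by
  rw [birkhoffAverage_congr_ring ℝ ℂ, birkhoffAverage, birkhoffSum, smul_eq_mul, cesaro,
    Finset.range_eq_Ico, ← Finset.Ico_add_one_right_eq_Icc, ← zero_add 1,
    ← Finset.sum_Ico_add' (fun m ↦ f (φ^[m] z))]
  simp only [Function.iterate_succ_apply]

theorem tendstoUniformlyOn_cesaro_of_birkhoffAverage {K : Set ℂ} (hφ : MapsTo φ K K)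
    (h : TendstoUniformlyOn (birkhoffAverage ℝ φ f) g atTop K) :
    TendstoUniformlyOn (cesaro φ f) (g ∘ φ) atTop K :=
  ((h.comp φ).mono hφ).congr <| .of_forall fun n z _ ↦ (cesaro_eq_birkhoffAverage φ f n z).symm

theorem continuousOn_cesaro {K : Set ℂ} (hφ : ContinuousOn φ K) (hφK : MapsTo φ K K)
    (hf : ContinuousOn f K) (n : ℕ) : ContinuousOn (cesaro φ f n) K :=
  continuousOn_const.mul <| continuousOn_finsetSum _ fun m _ ↦
    hf.comp (hφ.iterate hφK m) (hφK.iterate m)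

theorem tendsto_cesaro_of_tendsto_comp_iterate {z c : ℂ}
    (h : Tendsto (fun n ↦ f (φ^[n] z)) atTop (𝓝 c)) :
    Tendsto (cesaro φ f · z) atTop (𝓝 c) := by
  simp only [cesaro_eq_birkhoffAverage]
  exact ((tendsto_add_atTop_iff_nat 1).2 h).cesaro_smul

theorem tendsto_birkhoffAverage_of_tendsto_cesaro {K : Set ℂ} (hφ : MapsTo φ K K) {C : ℝ}
    (hf : ∀ w ∈ K, ‖f w‖ ≤ C) {z c : ℂ} (hz : z ∈ K)
    (h : Tendsto (cesaro φ f · z) atTop (𝓝 c)) :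
    Tendsto (birkhoffAverage ℝ φ f · z) atTop (𝓝 c) := by
  have hbounded : Bornology.IsBounded (range fun n ↦ f (φ^[n] z)) :=
    isBounded_iff_forall_norm_le.2 ⟨C, forall_mem_range.2 fun n ↦ hf _ (hφ.iterate n hz)⟩
  simpa [cesaro_eq_birkhoffAverage] using
    h.sub (tendsto_birkhoffAverage_apply_sub_birkhoffAverage ℝ hbounded)

/- The index `n` can be fixed before `j` by uniformity, which exchanges the two limits. -/
theorem eq_of_tendsto_cesaro_of_unifMeanErgodicDiscAlg (h : UnifMeanErgodicDiscAlg φ)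
    {f : ℕ → ℂ → ℂ} (hf : ∀ j, IsDiscAlg (f j)) (hf1 : ∀ j, ∀ w ∈ closedBall (0 : ℂ) 1, ‖f j w‖ ≤ 1)
    {z a b : ℂ} (hz : z ∈ closedBall (0 : ℂ) 1)
    (ha : ∀ᶠ n in atTop, Tendsto (fun j ↦ cesaro φ (f j) n z) atTop (𝓝 a))
    (hb : ∀ᶠ j in atTop, Tendsto (cesaro φ (f j) · z) atTop (𝓝 b)) : a = b := by
  obtain ⟨P, hP⟩ := h
  have hPlim : ∀ j, Tendsto (cesaro φ (f j) · z) atTop (𝓝 (P (f j) z)) := fun j ↦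
    Metric.tendsto_atTop'.2 fun ε hε ↦ by
      obtain ⟨N, hN⟩ := hP (ε / 2) (half_pos hε)
      exact ⟨N, fun n hn ↦ dist_eq_norm (cesaro φ (f j) n z) _ ▸
        (hN n hn.le (f j) (hf j) (hf1 j) z hz).trans_lt (half_lt_self hε)⟩
  refine eq_of_forall_dist_le fun ε hε ↦ ?_
  obtain ⟨N, hN⟩ := hP ε hε
  obtain ⟨n, hn, hnN⟩ := (ha.and (eventually_ge_atTop N)).exists
  rw [dist_eq_norm]
  refine le_of_tendsto (hn.sub_const b).norm (hb.mono fun j hj ↦ ?_)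
  rw [tendsto_nhds_unique hj (hPlim j)]
  exact hN n hnN (f j) (hf j) (hf1 j) z hz

end CesaroMeans

section EllipticCase

variable {φ : ℂ → ℂ} {a l : ℂ}

theorem IsEllipticAutomorphism.congr {ψ : ℂ → ℂ} (hψ : IsEllipticAutomorphism ψ)
    (h : EqOn φ ψ (ball 0 1)) : IsEllipticAutomorphism φ := by
  obtain ⟨⟨hd, hmaps, χ, hχd, hχmaps, hleft, hright⟩, z, hz, hfix⟩ := hψ
  refine ⟨⟨hd.congr h, hmaps.congr h.symm, χ, hχd, hχmaps, fun w hw ↦ ?_, fun w hw ↦ ?_⟩,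
    z, hz, (h hz).trans hfix⟩
  · rw [h hw, hleft w hw]
  · rw [h (hχmaps hw), hright w hw]

theorem iterate_eq_diskRotation_pow (ha : ‖a‖ < 1) (hl : ‖l‖ = 1)
    (h : EqOn φ (diskRotation a l) (closedBall 0 1)) (n : ℕ) :
    EqOn φ^[n] (diskRotation a (l ^ n)) (closedBall 0 1) := fun z hz ↦ by
  have hz1 := mem_closedBall_zero_iff.1 hz
  have hln : ∀ n : ℕ, ‖l ^ n‖ = 1 := fun n ↦ by simp [hl]
  induction n with
  | zero => simp [diskRotation_one ha hz1]
  | succ n ih =>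
    rw [Function.iterate_succ_apply', ih, h (mapsTo_diskRotation_closedBall ha (hln n) hz),
      pow_succ', diskRotation_mul ha (hln n) hz1]

theorem mobius_apply_of_eqOn_diskRotation (ha : ‖a‖ < 1) (hl : ‖l‖ = 1)
    (h : EqOn φ (diskRotation a l) (closedBall 0 1)) {z : ℂ} (hz : z ∈ closedBall (0 : ℂ) 1) :
    mobius a (φ z) = l * mobius a z := by
  rw [h hz, mobius_diskRotation ha hl (mem_closedBall_zero_iff.1 hz)]

/- Polynomials in the eigenfunction `mobius a` are dense in the disc algebra. -/
theorem meanErgodicDiscAlg_of_eqOn_diskRotation (ha : ‖a‖ < 1) (hl : ‖l‖ = 1)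
    (h : EqOn φ (diskRotation a l) (closedBall 0 1)) : MeanErgodicDiscAlg φ := fun f hf ↦ by
  have hφ : MapsTo φ (closedBall 0 1) (closedBall 0 1) :=
    (mapsTo_diskRotation_closedBall ha hl).congr h.symm
  have hfa : IsDiscAlg (f ∘ mobius a) :=
    ⟨hf.1.comp (isDiscAlg_mobius ha).1 (mapsTo_mobius_closedBall ha),
      hf.2.comp (isDiscAlg_mobius ha).2 (mapsTo_mobius_ball ha)⟩
  have happ : ∀ ε > 0, ∃ p q : ℂ → ℂ, (∀ z ∈ closedBall (0 : ℂ) 1, ‖f z - p z‖ ≤ ε) ∧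
      TendstoUniformlyOn (birkhoffAverage ℝ φ p) q atTop (closedBall 0 1) := fun ε hε ↦ by
    obtain ⟨p, hp⟩ := hfa.exists_polynomial_norm_sub_le hε
    obtain ⟨q, hq⟩ := exists_tendstoUniformlyOn_birkhoffAverage_polynomial_eval hl.le hφ
      (fun z hz ↦ mobius_apply_of_eqOn_diskRotation ha hl h hz)
      (fun z hz ↦ mem_closedBall_zero_iff.1 (mapsTo_mobius_closedBall ha hz)) p
    refine ⟨_, q, fun z hz ↦ ?_, hq⟩
    simpa [mobius_mobius ha (mem_closedBall_zero_iff.1 hz)] using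
      hp _ (mapsTo_mobius_closedBall ha hz)
  obtain ⟨g, hg⟩ := exists_tendstoUniformlyOn_birkhoffAverage_of_approx hφ happ
  exact ⟨_, tendstoUniformlyOn_cesaro_of_birkhoffAverage hφ hg⟩

theorem unifMeanErgodicDiscAlg_of_iterate_eq (hφ : MapsTo φ (closedBall 0 1) (closedBall 0 1))
    {k : ℕ} (hk : 0 < k) (hper : ∀ z ∈ closedBall (0 : ℂ) 1, φ^[k] z = z) :
    UnifMeanErgodicDiscAlg φ := by
  refine ⟨fun f z ↦ cesaro φ f k z, fun ε hε ↦ ?_⟩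
  obtain ⟨N, hN⟩ := eventually_atTop.1 (((tendsto_const_div_atTop_nhds_zero_nat
    (2 * k * 1 : ℝ)).eventually_lt_const hε).and (eventually_gt_atTop 0))
  refine ⟨N, fun n hn f _ hf1 z hz ↦ ?_⟩
  simp only [cesaro_eq_birkhoffAverage]
  exact (norm_birkhoffAverage_sub_le_of_isPeriodicPt hφ hf1 hk (hN n hn).2 (hφ hz)
    (hper _ (hφ hz))).trans (hN n hn).1.le

theorem exists_strictMono_tendsto_pow_one (hl : ‖l‖ = 1) :
    ∃ ψ : ℕ → ℕ, StrictMono ψ ∧ Tendsto (fun j ↦ l ^ ψ j) atTop (𝓝 1) := by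
  obtain ⟨l, rfl⟩ : ∃ c : Circle, (c : ℂ) = l := ⟨⟨l, mem_sphere_zero_iff_norm.2 hl⟩, rfl⟩
  obtain ⟨ψ, hψ, hlim⟩ := (mapClusterPt_one_atTop_pow l).tendsto_subseq
  refine ⟨ψ, hψ, ?_⟩
  have hcoe : Continuous fun c : Circle ↦ (c : ℂ) := continuous_subtype_val
  simpa only [Function.comp_def, Circle.coe_pow, Circle.coe_one] using (hcoe.tendsto 1).comp hlim

theorem exists_pow_eq_one_of_unifMeanErgodicDiscAlg (ha : ‖a‖ < 1) (hl : ‖l‖ = 1)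
    (h : EqOn φ (diskRotation a l) (closedBall 0 1)) (hunif : UnifMeanErgodicDiscAlg φ) :
    ∃ k : ℕ, 0 < k ∧ l ^ k = 1 := by
  by_contra! hroot
  obtain ⟨ψ, hψ, hlim⟩ := exists_strictMono_tendsto_pow_one hl
  have hφ : MapsTo φ (closedBall 0 1) (closedBall 0 1) :=
    (mapsTo_diskRotation_closedBall ha hl).congr h.symm
  have hz : mobius a 1 ∈ closedBall (0 : ℂ) 1 := mapsTo_mobius_closedBall ha (by simp)
  have heigen : ∀ (j : ℕ), ∀ z ∈ closedBall (0 : ℂ) 1,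
      mobius a (φ z) ^ j = l ^ j * mobius a z ^ j := fun j z hz ↦ by
    rw [mobius_apply_of_eqOn_diskRotation ha hl h hz, mul_pow]
  have hcesaro : ∀ j n : ℕ, cesaro φ (fun w ↦ mobius a w ^ j) n (mobius a 1) =
      (n : ℂ)⁻¹ * (∑ i ∈ Finset.range n, (l ^ j) ^ i) * l ^ j := fun j n ↦ by
    rw [cesaro_eq_birkhoffAverage, birkhoffAverage_eq_of_eigenfunction hφ (heigen j) n (hφ hz),
      heigen j _ hz, mobius_mobius ha (by simp), one_pow, mul_one]
  refine one_ne_zero (α := ℂ) <| eq_of_tendsto_cesaro_of_unifMeanErgodicDiscAlg hunif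
    (f := fun j w ↦ mobius a w ^ ψ j) (fun j ↦ (isDiscAlg_mobius ha).pow _) (fun j w hw ↦ ?_) hz
    ((eventually_ne_atTop 0).mono fun n hn ↦ ?_) ((eventually_gt_atTop 0).mono fun j hj ↦ ?_)
  · simpa using pow_le_one₀ (norm_nonneg _)
      (mem_closedBall_zero_iff.1 (mapsTo_mobius_closedBall ha hw))
  · have hcont : Continuous fun μ : ℂ ↦ (n : ℂ)⁻¹ * (∑ i ∈ Finset.range n, μ ^ i) * μ := by fun_prop
    simpa [hcesaro, hn, Function.comp_def] using (hcont.tendsto 1).comp hlim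
  · have hpow : l ^ ψ j ≠ 1 := hroot _ (hj.trans_le (hψ.id_le j))
    simpa [hcesaro, hpow] using
      (tendsto_inv_mul_geom_sum (μ := l ^ ψ j) (by simp [hl])).mul_const (l ^ ψ j)

end EllipticCase

section BoundaryCase

open scoped ComplexConjugate

variable {φ f : ℂ → ℂ} {z₀ : ℂ}

theorem tendsto_cesaro_of_tendsto_iterate {K : Set ℂ} (hf : ContinuousOn f K)
    (hφ : MapsTo φ K K) (hz₀ : z₀ ∈ K) {z : ℂ} (hz : z ∈ K)
    (hlim : Tendsto (fun n ↦ φ^[n] z) atTop (𝓝 z₀)) :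
    Tendsto (cesaro φ f · z) atTop (𝓝 (f z₀)) :=
  tendsto_cesaro_of_tendsto_comp_iterate <| (hf z₀ hz₀).tendsto.comp <|
    tendsto_nhdsWithin_iff.2 ⟨hlim, .of_forall fun n ↦ hφ.iterate n hz⟩

theorem tendsto_cesaro_of_meanErgodicDiscAlg (hφc : ContinuousOn φ (closedBall 0 1))
    (hφ : MapsTo φ (closedBall 0 1) (closedBall 0 1)) (hz₀ : z₀ ∈ closedBall (0 : ℂ) 1)
    (hlim : ∀ z ∈ ball (0 : ℂ) 1, Tendsto (fun n ↦ φ^[n] z) atTop (𝓝 z₀))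
    (h : MeanErgodicDiscAlg φ) (hf : IsDiscAlg f) {z : ℂ} (hz : z ∈ closedBall (0 : ℂ) 1) :
    Tendsto (cesaro φ f · z) atTop (𝓝 (f z₀)) := by
  obtain ⟨g, hg⟩ := h f hf
  have hgball : EqOn g (fun _ ↦ f z₀) (ball 0 1) := fun w hw ↦
    tendsto_nhds_unique (hg.tendsto_at (ball_subset_closedBall hw))
      (tendsto_cesaro_of_tendsto_iterate hf.1 hφ hz₀ (ball_subset_closedBall hw) (hlim w hw))
  have hgcont : ContinuousOn g (closedBall 0 1) :=
    hg.continuousOn (Eventually.of_forall (continuousOn_cesaro hφc hφ hf.1)).frequently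
  have hgz : g z = f z₀ := hgball.of_subset_closure hgcont continuousOn_const
    ball_subset_closedBall (closure_ball (0 : ℂ) one_ne_zero).ge hz
  exact hgz ▸ hg.tendsto_at hz

theorem norm_sub_sq_le_two_mul_re_one_sub_conj_mul (hz₀ : ‖z₀‖ ≤ 1) {w : ℂ} (hw : ‖w‖ ≤ 1) :
    ‖w - z₀‖ ^ 2 ≤ 2 * (1 - conj z₀ * w).re := by
  have hexpand : ‖w - z₀‖ ^ 2 = ‖w‖ ^ 2 + ‖z₀‖ ^ 2 - 2 * (conj z₀ * w).re := by
    rw [Complex.sq_norm, normSq_sub, normSq_eq_norm_sq, normSq_eq_norm_sq, mul_comm w]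
  have hsq : ‖w‖ ^ 2 ≤ 1 := pow_le_one₀ (norm_nonneg w) hw
  have hsq₀ : ‖z₀‖ ^ 2 ≤ 1 := pow_le_one₀ (norm_nonneg z₀) hz₀
  rw [hexpand, sub_re, one_re]
  linarith

/- The averages of the peak function `1 - conj z₀ * w`, whose real part controls `‖w - z₀‖ ^ 2`,
tend to zero. -/
theorem hasDensityOne_of_meanErgodicDiscAlg (hφc : ContinuousOn φ (closedBall 0 1))
    (hφ : MapsTo φ (closedBall 0 1) (closedBall 0 1)) (hz₀ : ‖z₀‖ = 1)
    (hlim : ∀ z ∈ ball (0 : ℂ) 1, Tendsto (fun n ↦ φ^[n] z) atTop (𝓝 z₀))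
    (h : MeanErgodicDiscAlg φ) {z : ℂ} (hz : z ∈ closedBall (0 : ℂ) 1) {U : Set ℂ}
    (hU : U ∈ 𝓝 z₀) : HasDensityOne {n | φ^[n] z ∈ U} := by
  obtain ⟨δ, hδ, hδU⟩ := Metric.mem_nhds_iff.1 hU
  have hpeak : IsDiscAlg fun w ↦ 1 - conj z₀ * w := ⟨by fun_prop, by fun_prop⟩
  have hpeak0 : 1 - conj z₀ * z₀ = 0 := by simp [conj_mul', hz₀]
  obtain ⟨C, hC⟩ := (isCompact_closedBall (0 : ℂ) 1).exists_bound_of_continuousOn hpeak.1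
  have havg := tendsto_birkhoffAverage_of_tendsto_cesaro hφ hC hz
    (tendsto_cesaro_of_meanErgodicDiscAlg hφc hφ (by simp [hz₀]) hlim h hpeak hz)
  rw [hpeak0] at havg
  have hre : Tendsto (birkhoffAverage ℝ φ (fun w ↦ (1 - conj z₀ * w).re) · z) atTop (𝓝 0) := by
    simpa only [Function.comp_def, map_birkhoffAverage ℝ ℝ reCLM, reCLM_apply, zero_re] using
      (reCLM.continuous.tendsto 0).comp havg
  have hbound : ∀ w ∈ closedBall (0 : ℂ) 1, ‖w - z₀‖ ^ 2 ≤ 2 * (1 - conj z₀ * w).re := fun w hw ↦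
    norm_sub_sq_le_two_mul_re_one_sub_conj_mul hz₀.le (mem_closedBall_zero_iff.1 hw)
  refine hasDensityOne_of_tendsto_birkhoffAverage hφ hz (c := δ ^ 2 / 2) (by positivity)
    (fun w hw ↦ ?_) (fun w hw ↦ ?_) hre
  · linarith [hbound w hw, sq_nonneg ‖w - z₀‖]
  · have hδw : δ ≤ ‖w - z₀‖ := not_lt.1 fun hlt ↦ hw.2 (hδU (mem_ball_iff_norm.2 hlt))
    linarith [hbound w hw.1, pow_le_pow_left₀ hδ.le hδw 2]

theorem meanErgodicDiscAlg_of_hasDensityOne (hφc : ContinuousOn φ (closedBall 0 1))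
    (hφ : MapsTo φ (closedBall 0 1) (closedBall 0 1)) (hz₀ : z₀ ∈ closedBall (0 : ℂ) 1)
    (hlim : ∀ z ∈ ball (0 : ℂ) 1, Tendsto (fun n ↦ φ^[n] z) atTop (𝓝 z₀))
    (hden : ∀ z : ℂ, ‖z‖ = 1 → ∀ U ∈ 𝓝 z₀, HasDensityOne {n | φ^[n] z ∈ U}) :
    MeanErgodicDiscAlg φ := fun f hf ↦ by
  have hdisc : ∀ z ∈ closedBall (0 : ℂ) 1, ∀ U ∈ 𝓝 z₀, HasDensityOne {n | φ^[n] z ∈ U} :=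
    fun z hz U hU ↦ by
      rcases (mem_closedBall_zero_iff.1 hz).lt_or_eq with hlt | heq
      · exact hasDensityOne_of_eventually ((hlim z (mem_ball_zero_iff.2 hlt)).eventually_mem hU)
      · exact hden z heq U hU
  exact ⟨_, tendstoUniformlyOn_cesaro_of_birkhoffAverage hφ <|
    tendstoUniformlyOn_birkhoffAverage_of_hasDensityOne (isCompact_closedBall (0 : ℂ) 1) hφc hφ
      hf.1 hz₀ hdisc⟩

theorem not_unifMeanErgodicDiscAlg_of_tendsto (hφ : MapsTo φ (closedBall 0 1) (closedBall 0 1))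
    (hφb : MapsTo φ (ball 0 1) (ball 0 1)) (hz₀ : ‖z₀‖ = 1)
    (hlim : Tendsto (fun n ↦ φ^[n] 0) atTop (𝓝 z₀)) : ¬ UnifMeanErgodicDiscAlg φ := fun h ↦ by
  have hf : ∀ j : ℕ, IsDiscAlg fun w ↦ (conj z₀ * w) ^ j := fun j ↦ ⟨by fun_prop, by fun_prop⟩
  refine zero_ne_one (α := ℂ) <| eq_of_tendsto_cesaro_of_unifMeanErgodicDiscAlg h hf
    (fun j w hw ↦ ?_) (z := 0) (by simp) (.of_forall fun n ↦ ?_) (.of_forall fun j ↦ ?_)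
  · simpa [hz₀] using pow_le_one₀ (norm_nonneg w) (mem_closedBall_zero_iff.1 hw)
  · have hpow : ∀ m, Tendsto (fun j ↦ (conj z₀ * φ^[m] 0) ^ j) atTop (𝓝 0) := fun m ↦
      tendsto_pow_atTop_nhds_zero_of_norm_lt_one <| by
        simpa [hz₀] using hφb.iterate m (mem_ball_self one_pos)
    simpa [cesaro] using (tendsto_finsetSum (Finset.Icc 1 n) fun m _ ↦ hpow m).const_mul (n : ℂ)⁻¹
  · simpa [conj_mul', hz₀] using
      tendsto_cesaro_of_tendsto_iterate (hf j).1 hφ (by simp [hz₀]) (z := 0) (by simp) hlim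

end BoundaryCase

/-- **Theorem B1.** Let `φ ∈ A(𝔻)` map `𝔻̄` into `𝔻̄`, `φ` not the identity, and assume `φ`
has no interior Denjoy–Wolff point. Then: (1) `C_φ : A(𝔻) → A(𝔻)` is mean ergodic iff `φ`
is an elliptic automorphism or there is `z₀ ∈ ∂𝔻` with `φ^n → z₀` uniformly on compact
subsets of `𝔻` such that for every `z ∈ ∂𝔻` and every neighborhood `U` of `z₀` the set
`{n : φ^n(z) ∈ U}` has density `1`; (2) `C_φ` is uniformly mean ergodic iff `φ` is a
periodic elliptic automorphism. -/
theorem stmt_16 (φ : ℂ → ℂ) (hφa : IsDiscAlg φ)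
    (hφm : MapsTo φ (closedBall (0:ℂ) 1) (closedBall (0:ℂ) 1))
    (hφb : MapsTo φ (ball (0:ℂ) 1) (ball (0:ℂ) 1))
    (hφid : ¬ ∀ z ∈ closedBall (0:ℂ) 1, φ z = z)
    (hnoint : ¬ ∃ z₀ ∈ ball (0:ℂ) 1,
      TendstoLocallyUniformlyOn (fun (n : ℕ) (z : ℂ) => φ^[n] z) (fun _ => z₀) atTop
        (ball (0:ℂ) 1)) :
    (MeanErgodicDiscAlg φ ↔
      (IsEllipticAutomorphism φ ∨
        ∃ z₀ : ℂ, ‖z₀‖ = 1 ∧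
          TendstoLocallyUniformlyOn (fun (n : ℕ) (z : ℂ) => φ^[n] z) (fun _ => z₀) atTop
            (ball (0:ℂ) 1) ∧
          ∀ z : ℂ, ‖z‖ = 1 → ∀ U ∈ 𝓝 z₀, HasDensityOne {n : ℕ | φ^[n] z ∈ U})) ∧
    (UnifMeanErgodicDiscAlg φ ↔
      (IsEllipticAutomorphism φ ∧ ∃ k : ℕ, 0 < k ∧ ∀ z ∈ closedBall (0:ℂ) 1, φ^[k] z = z)) := by
  rcases exists_eqOn_diskRotation_or_exists_tendstoLocallyUniformlyOn_iterate hφa.2 hφb hnoint with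
    ⟨a, l, ha, hl, hrot⟩ | ⟨hfix, z₀, hz₀, hconv⟩
  · have hrot' := hφa.eqOn_closedBall (isDiscAlg_diskRotation ha hl) hrot
    have hell := (isEllipticAutomorphism_diskRotation ha hl).congr hrot
    refine ⟨iff_of_true (meanErgodicDiscAlg_of_eqOn_diskRotation ha hl hrot') (.inl hell),
      fun h ↦ ⟨hell, ?_⟩, fun ⟨_, _, hk, hper⟩ ↦ unifMeanErgodicDiscAlg_of_iterate_eq hφm hk hper⟩
    obtain ⟨k, hk, hlk⟩ := exists_pow_eq_one_of_unifMeanErgodicDiscAlg ha hl hrot' h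
    refine ⟨k, hk, fun z hz ↦ ?_⟩
    rw [iterate_eq_diskRotation_pow ha hl hrot' k hz, hlk, diskRotation_one ha (by simpa using hz)]
  · have hnell : ¬ IsEllipticAutomorphism φ := fun ⟨_, z, hz, hφz⟩ ↦ hfix z hz hφz
    have hlim : ∀ z ∈ ball (0 : ℂ) 1, Tendsto (fun n ↦ φ^[n] z) atTop (𝓝 z₀) :=
      fun _ ↦ hconv.tendsto_at
    refine ⟨⟨fun h ↦ .inr ⟨z₀, hz₀, hconv, fun z hz U hU ↦
      hasDensityOne_of_meanErgodicDiscAlg hφa.1 hφm hz₀ hlim h (by simp [hz]) hU⟩, ?_⟩,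
      iff_of_false (not_unifMeanErgodicDiscAlg_of_tendsto hφm hφb hz₀ (hlim 0 (by simp)))
        fun h ↦ hnell h.1⟩
    rintro (hell | ⟨w, hw, hconvw, hden⟩)
    · exact (hnell hell).elim
    · exact meanErgodicDiscAlg_of_hasDensityOne hφa.1 hφm (by simp [hw])
        (fun _ ↦ hconvw.tendsto_at) hden
end
end

section
/- Let λ ∈ ℂ with |λ| = 1 not be a root of unity and consider the symbol φ(z) = λz. Fix 0 < α < 1, R > 1, r₀ ∈ (0,1), and a strictly increasing sequence (n_k)_k of positive integers with n_k ≥ k and |1 − λ^{n_k}| ≤ 1/R^k for every k. Define the typical weight v_α on 𝔻 by v_α(r) = C·(Σ_{k=1}^∞ r^{n_k})^{−α} for r₀ ≤ r < 1 and v_α(r) = 1 for r ≤ r₀, where C = (Σ_{k=1}^∞ r₀^{n_k})^α. Then the composition operator C_φ is not uniformly mean ergodic on H_{v_α}^0, and it is not mean ergodic on H_{v_α}^∞. -/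
open Metric Set Filter Complex
open scoped Topology Classical

noncomputable section

/-!
For an irrational rotation the Cesàro means of `f` converge pointwise to `f 0`, so `0` is their only
possible limit when `f 0 = 0`. This convergence is arbitrarily slow: where `lam ^ m` is close to
`1`, the monomial `z ^ m`, normalised in `H_v^∞`, is nearly fixed by as many means as desired.

The weighted modulus of a single monomial tends to `0` at the boundary, and that of a normalised
monomial of high degree is small away from the boundary. A sum of normalised monomials along a
sparse sequence of such degrees therefore lies in `H_v^∞` (a gliding hump), and near its `j`-th peak
it looks like its `j`-th term; so its Cesàro means do not tend to `0` in norm.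
-/

/-- `C_φ` is uniformly mean ergodic on `H_v^0`: the Cesàro means converge in operator norm,
i.e. uniformly over the unit ball of `H_v^0`, to some (not necessarily linear) map `P`. -/
def UnifMeanErgodicHv0 (v : ℂ → ℝ) (φ : ℂ → ℂ) : Prop :=
  ∃ P : (ℂ → ℂ) → ℂ → ℂ, ∀ ε > (0 : ℝ), ∃ N : ℕ, ∀ n ≥ N,
    ∀ f : ℂ → ℂ, IsHv0 v f → (∀ z ∈ ball (0 : ℂ) 1, v z * ‖f z‖ ≤ 1) →
      ∀ z ∈ ball (0 : ℂ) 1, v z * ‖cesaro φ f n z - P f z‖ ≤ ε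

/-- `C_φ` is mean ergodic on `H_v^∞`: for each `f ∈ H_v^∞` the Cesàro means converge in the
norm of `H_v^∞`. -/
def MeanErgodicHvInf (v : ℂ → ℝ) (φ : ℂ → ℂ) : Prop :=
  ∀ f : ℂ → ℂ, IsHvInf v f → ∃ g : ℂ → ℂ, ∀ ε > (0 : ℝ), ∃ N : ℕ, ∀ n ≥ N,
    ∀ z ∈ ball (0 : ℂ) 1, v z * ‖cesaro φ f n z - g z‖ ≤ ε

section PowAverage

/-- The average `(μ + μ² + ⋯ + μⁿ) / n` of the first `n` powers of `μ`, the factor by which the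
`n`-th Cesàro mean of a rotation acts on a monomial. -/
def powAverage (μ : ℂ) (n : ℕ) : ℂ :=
  (n : ℂ)⁻¹ * ∑ j ∈ Finset.Icc 1 n, μ ^ j

variable {μ : ℂ}

lemma norm_powAverage_le_one (hμ : ‖μ‖ ≤ 1) (n : ℕ) : ‖powAverage μ n‖ ≤ 1 := by
  have hsum : ‖∑ j ∈ Finset.Icc 1 n, μ ^ j‖ ≤ n := by
    simpa using norm_sum_le_of_le (Finset.Icc 1 n) fun j _ ↦
      (norm_pow μ j).trans_le (pow_le_one₀ (norm_nonneg μ) hμ)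
  rw [powAverage, norm_mul, norm_inv, Complex.norm_natCast]
  exact inv_mul_le_one_of_le₀ hsum n.cast_nonneg

lemma tendsto_powAverage_zero (hμ : ‖μ‖ ≤ 1) (hμ1 : μ ≠ 1) :
    Tendsto (powAverage μ) atTop (𝓝 0) := by
  refine tendsto_inv_atTop_nhds_zero_nat.zero_mul_isBoundedUnder_le
    (isBoundedUnder_of ⟨2 / ‖μ - 1‖, fun n ↦ ?_⟩)
  rw [Function.comp_apply, ← Finset.Ico_add_one_right_eq_Icc, geom_sum_Ico hμ1 (by lia), norm_div]
  gcongr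
  calc ‖μ ^ (n + 1) - μ ^ 1‖ ≤ ‖μ‖ ^ (n + 1) + ‖μ‖ ^ 1 := by
        rw [← norm_pow, ← norm_pow]
        exact norm_sub_le _ _
    _ ≤ 1 + 1 := add_le_add (pow_le_one₀ (norm_nonneg μ) hμ) (pow_le_one₀ (norm_nonneg μ) hμ)
    _ = 2 := one_add_one_eq_two

lemma tendsto_powAverage_one : Tendsto (powAverage 1) atTop (𝓝 1) :=
  tendsto_const_nhds.congr' <| (eventually_ne_atTop 0).mono fun n hn ↦ by simp [powAverage, hn]

end PowAverage

section Rotation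

variable {lam : ℂ} {f : ℂ → ℂ}

lemma norm_pow_mul_of_norm_eq_one (hlam : ‖lam‖ = 1) (j : ℕ) (z : ℂ) : ‖lam ^ j * z‖ = ‖z‖ := by
  rw [norm_mul, norm_pow, hlam, one_pow, one_mul]

lemma cesaro_rotation (lam : ℂ) (f : ℂ → ℂ) (n : ℕ) (z : ℂ) :
    cesaro (fun w ↦ lam * w) f n z = (n : ℂ)⁻¹ * ∑ j ∈ Finset.Icc 1 n, f (lam ^ j * z) := by
  simp only [cesaro, mul_left_iterate]

lemma hasSum_cesaro_rotation (hlam : ‖lam‖ = 1) {a : ℕ → ℂ}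
    (hf : ∀ z ∈ ball (0 : ℂ) 1, HasSum (fun k ↦ a k * z ^ k) (f z)) (n : ℕ)
    {z : ℂ} (hz : z ∈ ball (0 : ℂ) 1) :
    HasSum (fun k ↦ powAverage (lam ^ k) n * (a k * z ^ k)) (cesaro (fun w ↦ lam * w) f n z) := by
  have hmem (j : ℕ) : lam ^ j * z ∈ ball (0 : ℂ) 1 := by
    rw [mem_ball_zero_iff] at hz ⊢
    rwa [norm_pow_mul_of_norm_eq_one hlam]
  rw [cesaro_rotation]
  refine ((hasSum_sum fun j _ ↦ hf _ (hmem j)).mul_left (n : ℂ)⁻¹).congr_fun fun k ↦ ?_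
  rw [powAverage, mul_assoc, Finset.sum_mul]
  congr 1
  exact Finset.sum_congr rfl fun j _ ↦ by ring

/-- Only the constant term of the Taylor series of `f` survives the averaging. -/
theorem tendsto_cesaro_rotation (hlam : ‖lam‖ = 1) (hroot : ∀ j : ℕ, 0 < j → lam ^ j ≠ 1)
    (hf : DifferentiableOn ℂ f (ball 0 1)) {z : ℂ} (hz : z ∈ ball (0 : ℂ) 1) :
    Tendsto (fun n ↦ cesaro (fun w ↦ lam * w) f n z) atTop (𝓝 (f 0)) := by
  obtain ⟨a, ha⟩ : ∃ a : ℕ → ℂ, ∀ w ∈ ball (0 : ℂ) 1, HasSum (fun k ↦ a k * w ^ k) (f w) :=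
    ⟨fun k ↦ (k.factorial : ℂ)⁻¹ * iteratedDeriv k f 0, fun w hw ↦
      (Complex.hasSum_taylorSeries_on_ball hf hw).congr_fun fun k ↦ by
        simp only [sub_zero, smul_eq_mul]; ring⟩
  have hlamk (k : ℕ) : ‖lam ^ k‖ ≤ 1 := by rw [norm_pow, hlam, one_pow]
  have hterm (k : ℕ) : Tendsto (fun n ↦ powAverage (lam ^ k) n * (a k * z ^ k)) atTop
      (𝓝 (a k * 0 ^ k)) := by
    rcases Nat.eq_zero_or_pos k with rfl | hk
    · simpa using tendsto_powAverage_one.mul_const (a 0)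
    · simpa [hk.ne'] using
        (tendsto_powAverage_zero (hlamk k) (hroot k hk)).mul_const (a k * z ^ k)
  have hlim := tendsto_tsum_of_dominated_convergence (ha z hz).summable.norm hterm <|
    .of_forall fun n k ↦ by
      rw [norm_mul]
      exact mul_le_of_le_one_left (norm_nonneg _) (norm_powAverage_le_one (hlamk k) n)
  rw [(ha 0 (mem_ball_self one_pos)).tsum_eq] at hlim
  exact hlim.congr fun n ↦ (hasSum_cesaro_rotation hlam ha n hz).tsum_eq

lemma norm_rotation_iterate_sub_le (hlam : ‖lam‖ = 1) {z : ℂ} {δ : ℝ}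
    (hδ : ∀ w, ‖w‖ = ‖z‖ → ‖f (lam * w) - f w‖ ≤ δ) (j : ℕ) :
    ‖f (lam ^ j * z) - f z‖ ≤ j * δ := by
  induction j with
  | zero => simp
  | succ j ih =>
    have hstep : ‖f (lam ^ (j + 1) * z) - f (lam ^ j * z)‖ ≤ δ := by
      rw [pow_succ', mul_assoc]
      exact hδ _ (norm_pow_mul_of_norm_eq_one hlam j z)
    calc ‖f (lam ^ (j + 1) * z) - f z‖
        ≤ ‖f (lam ^ (j + 1) * z) - f (lam ^ j * z)‖ + ‖f (lam ^ j * z) - f z‖ :=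
          norm_sub_le_norm_sub_add_norm_sub ..
      _ ≤ δ + j * δ := add_le_add hstep ih
      _ = (j + 1 : ℕ) * δ := by push_cast; ring

theorem norm_cesaro_rotation_sub_self_le (hlam : ‖lam‖ = 1) {z : ℂ} {δ : ℝ}
    (hδ : ∀ w, ‖w‖ = ‖z‖ → ‖f (lam * w) - f w‖ ≤ δ) {n : ℕ} (hn : 0 < n) :
    ‖cesaro (fun w ↦ lam * w) f n z - f z‖ ≤ n * δ := by
  have hδ0 : 0 ≤ δ := (norm_nonneg _).trans (hδ z rfl)
  have hn' : (0 : ℝ) < n := Nat.cast_pos.2 hn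
  have hmean : cesaro (fun w ↦ lam * w) f n z - f z =
      (n : ℂ)⁻¹ * ∑ j ∈ Finset.Icc 1 n, (f (lam ^ j * z) - f z) := by
    have hnC : (n : ℂ) ≠ 0 := Nat.cast_ne_zero.2 hn.ne'
    simp [cesaro_rotation, Finset.sum_sub_distrib, mul_sub, hnC]
  rw [hmean, norm_mul, norm_inv, Complex.norm_natCast, inv_mul_le_iff₀ hn']
  simpa using norm_sum_le_of_le (Finset.Icc 1 n) fun j hj ↦
    (norm_rotation_iterate_sub_le hlam hδ j).trans <|
      mul_le_mul_of_nonneg_right (Nat.cast_le.2 (Finset.mem_Icc.1 hj).2) hδ0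

lemma mul_norm_le_mul_norm_cesaro_rotation_add (hlam : ‖lam‖ = 1) {c δ : ℝ} (hc : 0 < c) {z : ℂ}
    (hδ : ∀ w, ‖w‖ = ‖z‖ → c * ‖f (lam * w) - f w‖ ≤ δ) {n : ℕ} (hn : 0 < n) :
    c * ‖f z‖ ≤ c * ‖cesaro (fun w ↦ lam * w) f n z‖ + n * δ := by
  have hsub : ‖cesaro (fun w ↦ lam * w) f n z - f z‖ ≤ n * (δ / c) :=
    norm_cesaro_rotation_sub_self_le hlam (fun w hw ↦ (le_div_iff₀' hc).2 (hδ w hw)) hn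
  calc c * ‖f z‖ ≤ c * (‖cesaro (fun w ↦ lam * w) f n z‖ + n * (δ / c)) := by
        gcongr
        exact (norm_le_norm_add_norm_sub _ _).trans (by gcongr)
    _ = c * ‖cesaro (fun w ↦ lam * w) f n z‖ + n * δ := by field_simp

lemma frequently_norm_one_sub_pow_lt (hlam : ‖lam‖ = 1) {δ : ℝ} (hδ : 0 < δ) :
    ∃ᶠ m : ℕ in atTop, ‖1 - lam ^ m‖ < δ := by
  let c : Circle := ⟨lam, mem_sphere_zero_iff_norm.2 hlam⟩
  refine ((mapClusterPt_one_atTop_pow c).frequently (ball_mem_nhds 1 hδ)).mono fun m hm ↦ ?_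
  rw [← dist_eq_norm, dist_comm]
  exact hm

/-- A weighted norm limit of the Cesàro means is forced to be their pointwise limit `f 0`. -/
lemma eq_of_cesaro_rotation_approx (hlam : ‖lam‖ = 1) (hroot : ∀ j : ℕ, 0 < j → lam ^ j ≠ 1)
    (hf : DifferentiableOn ℂ f (ball 0 1)) {z g : ℂ} (hz : z ∈ ball (0 : ℂ) 1) {c : ℝ} (hc : 0 < c)
    (hg : ∀ ε > (0 : ℝ), ∃ N : ℕ, ∀ n ≥ N, c * ‖cesaro (fun w ↦ lam * w) f n z - g‖ ≤ ε) :
    g = f 0 := by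
  refine tendsto_nhds_unique (Metric.tendsto_atTop.2 fun ε hε ↦ ?_)
    (tendsto_cesaro_rotation hlam hroot hf hz)
  obtain ⟨N, hN⟩ := hg (c * (ε / 2)) (by positivity)
  refine ⟨N, fun n hn ↦ ?_⟩
  rw [dist_eq_norm]
  exact (le_of_mul_le_mul_left (hN n hn) hc).trans_lt (half_lt_self hε)

end Rotation

namespace IsTypicalWeight

variable {v : ℂ → ℝ}

lemma pos (hv : IsTypicalWeight v) {z : ℂ} (hz : z ∈ ball (0 : ℂ) 1) : 0 < v z :=
  hv.2.1 z hz

lemma exists_le (hv : IsTypicalWeight v) : ∃ M : ℝ, ∀ z ∈ ball (0 : ℂ) 1, v z ≤ M :=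
  hv.2.2.1

lemma exists_forall_lt (hv : IsTypicalWeight v) {ε : ℝ} (hε : 0 < ε) :
    ∃ r < 1, ∀ z ∈ ball (0 : ℂ) 1, r ≤ ‖z‖ → v z < ε :=
  hv.2.2.2.2.2 ε hε

end IsTypicalWeight

/-- The norm of the monomial `z ^ m` in `H_v^∞`. -/
def monomialNorm (v : ℂ → ℝ) (m : ℕ) : ℝ :=
  sSup ((fun z : ℂ ↦ v z * ‖z‖ ^ m) '' ball 0 1)

/-- The monomial `z ^ m`, scaled to have norm `1` in `H_v^∞`. -/
def unitMonomial (v : ℂ → ℝ) (m : ℕ) (z : ℂ) : ℂ :=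
  z ^ m / (monomialNorm v m : ℂ)

section UnitMonomial

variable {v : ℂ → ℝ} {m : ℕ} {z : ℂ}

lemma bddAbove_weighted_monomial (hv : IsTypicalWeight v) (m : ℕ) :
    BddAbove ((fun z : ℂ ↦ v z * ‖z‖ ^ m) '' ball 0 1) := by
  obtain ⟨M, hM⟩ := hv.exists_le
  refine ⟨M, forall_mem_image.2 fun z hz ↦ ?_⟩
  have hz' : ‖z‖ ≤ 1 := (mem_ball_zero_iff.1 hz).le
  exact (mul_le_of_le_one_right (hv.pos hz).le (pow_le_one₀ (norm_nonneg z) hz')).trans (hM z hz)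

lemma mul_pow_le_monomialNorm (hv : IsTypicalWeight v) (m : ℕ) (hz : z ∈ ball (0 : ℂ) 1) :
    v z * ‖z‖ ^ m ≤ monomialNorm v m :=
  le_csSup (bddAbove_weighted_monomial hv m) (mem_image_of_mem _ hz)

lemma monomialNorm_pos (hv : IsTypicalWeight v) (m : ℕ) : 0 < monomialNorm v m := by
  have hhalf : (1 / 2 : ℂ) ∈ ball (0 : ℂ) 1 := by norm_num
  exact (mul_pos (hv.pos hhalf) (by norm_num)).trans_le (mul_pow_le_monomialNorm hv m hhalf)

lemma norm_unitMonomial (hv : IsTypicalWeight v) (m : ℕ) (z : ℂ) :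
    ‖unitMonomial v m z‖ = ‖z‖ ^ m / monomialNorm v m := by
  rw [unitMonomial, norm_div, norm_pow, Complex.norm_of_nonneg (monomialNorm_pos hv m).le]

lemma unitMonomial_zero (hm : 0 < m) : unitMonomial v m 0 = 0 := by
  rw [unitMonomial, zero_pow hm.ne', zero_div]

lemma differentiable_unitMonomial (v : ℂ → ℝ) (m : ℕ) : Differentiable ℂ (unitMonomial v m) :=
  (differentiable_pow m).div_const _

lemma norm_unitMonomial_le_of_norm_le (hv : IsTypicalWeight v) (m : ℕ) {w : ℂ} (h : ‖z‖ ≤ ‖w‖) :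
    ‖unitMonomial v m z‖ ≤ ‖unitMonomial v m w‖ := by
  rw [norm_unitMonomial hv, norm_unitMonomial hv]
  exact div_le_div_of_nonneg_right (pow_le_pow_left₀ (norm_nonneg z) h m) (monomialNorm_pos hv m).le

lemma norm_unitMonomial_mul_sub (v : ℂ → ℝ) (m : ℕ) (lam z : ℂ) :
    ‖unitMonomial v m (lam * z) - unitMonomial v m z‖ = ‖1 - lam ^ m‖ * ‖unitMonomial v m z‖ := by
  rw [norm_sub_rev, ← norm_mul]
  congr 1
  simp only [unitMonomial]
  ring

lemma mul_norm_unitMonomial_le_one (hv : IsTypicalWeight v) (m : ℕ) (hz : z ∈ ball (0 : ℂ) 1) :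
    v z * ‖unitMonomial v m z‖ ≤ 1 := by
  rw [norm_unitMonomial hv, ← mul_div_assoc]
  exact (div_le_one (monomialNorm_pos hv m)).2 (mul_pow_le_monomialNorm hv m hz)

lemma exists_half_lt_mul_norm_unitMonomial (hv : IsTypicalWeight v) (m : ℕ) :
    ∃ z ∈ ball (0 : ℂ) 1, 1 / 2 < v z * ‖unitMonomial v m z‖ := by
  obtain ⟨_, ⟨z, hz, rfl⟩, hlt⟩ := exists_lt_of_lt_csSup
    ((nonempty_ball.2 one_pos).image fun z : ℂ ↦ v z * ‖z‖ ^ m)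
    (half_lt_self (monomialNorm_pos hv m))
  refine ⟨z, hz, ?_⟩
  rwa [norm_unitMonomial hv, ← mul_div_assoc, lt_div_iff₀ (monomialNorm_pos hv m),
    one_div_mul_eq_div]

lemma isHv0_unitMonomial (hv : IsTypicalWeight v) (m : ℕ) : IsHv0 v (unitMonomial v m) := by
  refine ⟨⟨(differentiable_unitMonomial v m).differentiableOn, 1,
    fun z hz ↦ mul_norm_unitMonomial_le_one hv m hz⟩, fun ε hε ↦ ?_⟩
  obtain ⟨r, hr, hlt⟩ := hv.exists_forall_lt (mul_pos hε (monomialNorm_pos hv m))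
  refine ⟨r, hr, fun z hz hrz ↦ ?_⟩
  have hz' : ‖z‖ ≤ 1 := (mem_ball_zero_iff.1 hz).le
  rw [norm_unitMonomial hv, ← mul_div_assoc, div_lt_iff₀ (monomialNorm_pos hv m)]
  exact (mul_le_of_le_one_right (hv.pos hz).le (pow_le_one₀ (norm_nonneg z) hz')).trans_lt
    (hlt z hz hrz)

/-- Comparing with a larger radius `ρ < 1`, the terms are dominated by `(‖z‖ / ρ) ^ m / v ρ`. -/
lemma summable_norm_unitMonomial (hv : IsTypicalWeight v) (hz : z ∈ ball (0 : ℂ) 1) :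
    Summable fun m ↦ ‖unitMonomial v m z‖ := by
  obtain ⟨ρ, hzρ, hρ1⟩ := exists_between (mem_ball_zero_iff.1 hz)
  have hρ0 : 0 < ρ := (norm_nonneg z).trans_lt hzρ
  have hρ : ‖(ρ : ℂ)‖ = ρ := Complex.norm_of_nonneg hρ0.le
  have hρmem : (ρ : ℂ) ∈ ball (0 : ℂ) 1 := by rwa [mem_ball_zero_iff, hρ]
  have hvρ := hv.pos hρmem
  have hgeom : Summable fun m : ℕ ↦ (‖z‖ / ρ) ^ m / v ρ :=
    (summable_geometric_of_lt_one (by positivity) ((div_lt_one hρ0).2 hzρ)).div_const _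
  refine hgeom.of_nonneg_of_le (fun m ↦ norm_nonneg _) fun m ↦ ?_
  have hle := mul_pow_le_monomialNorm hv m hρmem
  rw [hρ] at hle
  calc ‖unitMonomial v m z‖ = ‖z‖ ^ m / monomialNorm v m := norm_unitMonomial hv m z
    _ ≤ ‖z‖ ^ m / (v ρ * ρ ^ m) := by gcongr
    _ = (‖z‖ / ρ) ^ m / v ρ := by rw [div_pow, div_div, mul_comm]

lemma eventually_mul_norm_unitMonomial_le (hv : IsTypicalWeight v) {r ε : ℝ} (hr : r < 1)
    (hε : 0 < ε) :
    ∀ᶠ m in atTop, ∀ z ∈ ball (0 : ℂ) 1, ‖z‖ ≤ r → v z * ‖unitMonomial v m z‖ ≤ ε := by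
  obtain ⟨M, hM⟩ := hv.exists_le
  rcases lt_or_ge r 0 with hr0 | hr0
  · exact .of_forall fun m z _ hzr ↦ absurd (hzr.trans_lt hr0) (norm_nonneg z).not_gt
  have hnorm : ‖(r : ℂ)‖ = r := Complex.norm_of_nonneg hr0
  have hlim := (summable_norm_unitMonomial hv
    (mem_ball_zero_iff.2 (hnorm.trans_lt hr))).tendsto_atTop_zero.const_mul M
  rw [mul_zero] at hlim
  filter_upwards [hlim.eventually_le_const hε] with m hm z hz hzr
  exact (mul_le_mul (hM z hz) (norm_unitMonomial_le_of_norm_le hv m (hzr.trans_eq hnorm.symm))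
    (norm_nonneg _) ((hv.pos hz).le.trans (hM z hz))).trans hm

/-- Near the boundary the fixed monomial is small, away from the boundary the one of high degree. -/
lemma eventually_unitMonomial_almostDisjoint (hv : IsTypicalWeight v) (k : ℕ) {ε : ℝ}
    (hε : 0 < ε) :
    ∀ᶠ m in atTop, ∀ z ∈ ball (0 : ℂ) 1,
      v z * ‖unitMonomial v k z‖ ≤ ε ∨ v z * ‖unitMonomial v m z‖ ≤ ε := by
  obtain ⟨r, hr, hlt⟩ := (isHv0_unitMonomial hv k).2 ε hε
  filter_upwards [eventually_mul_norm_unitMonomial_le hv hr hε] with m hm z hz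
  exact (le_total r ‖z‖).imp (fun hrz ↦ (hlt z hz hrz).le) (hm z hz)

end UnitMonomial

theorem not_unifMeanErgodicHv0_rotation {lam : ℂ} (hlam : ‖lam‖ = 1)
    (hroot : ∀ j : ℕ, 0 < j → lam ^ j ≠ 1) {v : ℂ → ℝ} (hv : IsTypicalWeight v) :
    ¬ UnifMeanErgodicHv0 v fun w ↦ lam * w := by
  rintro ⟨P, hP⟩
  obtain ⟨N, hN⟩ := hP (1 / 8) (by norm_num)
  obtain ⟨m, hm, hm0⟩ := ((frequently_norm_one_sub_pow_lt hlam
    (by positivity : 0 < 1 / (8 * ((N : ℝ) + 1)))).and_eventually (eventually_gt_atTop 0)).exists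
  obtain ⟨z, hz, hpeak⟩ := exists_half_lt_mul_norm_unitMonomial hv m
  have hvz := hv.pos hz
  set e := unitMonomial v m
  have he1 (w) (hw : w ∈ ball (0 : ℂ) 1) : v w * ‖e w‖ ≤ 1 := mul_norm_unitMonomial_le_one hv m hw
  have hPe : P e z = 0 :=
    (eq_of_cesaro_rotation_approx hlam hroot (differentiable_unitMonomial v m).differentiableOn
      hz hvz fun ε hε ↦ (hP ε hε).imp fun _ hn n hnn ↦
        hn n hnn e (isHv0_unitMonomial hv m) he1 z hz).trans (unitMonomial_zero hm0)
  have hmean : v z * ‖cesaro (fun w ↦ lam * w) e (N + 1) z‖ ≤ 1 / 8 := by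
    simpa only [hPe, sub_zero] using hN (N + 1) N.le_succ e (isHv0_unitMonomial hv m) he1 z hz
  have hrot (w : ℂ) (hw : ‖w‖ = ‖z‖) : v z * ‖e (lam * w) - e w‖ ≤ ‖1 - lam ^ m‖ := by
    rw [norm_unitMonomial_mul_sub, mul_left_comm]
    refine mul_le_of_le_one_right (norm_nonneg _) (le_trans ?_ (he1 z hz))
    exact mul_le_mul_of_nonneg_left (norm_unitMonomial_le_of_norm_le hv m hw.le) hvz.le
  have hpeak_le := mul_norm_le_mul_norm_cesaro_rotation_add hlam hvz hrot N.succ_pos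
  have hsmall : ((N + 1 : ℕ) : ℝ) * ‖1 - lam ^ m‖ ≤ 1 / 8 := by
    rw [lt_div_iff₀ (by positivity)] at hm
    push_cast
    linarith
  linarith

/-- A strictly increasing sequence of positive exponents along which the unit monomials have almost
disjoint peaks: at each point of the disc, one of the `i`-th and `j`-th weighted monomials (`i < j`)
is at most `2⁻ʲ / 8`. -/
structure HasDisjointPeaks (v : ℂ → ℝ) (m : ℕ → ℕ) : Prop where
  pos (j : ℕ) : 0 < m j
  strictMono : StrictMono m
  le_or_le {i j : ℕ} (hij : i < j) {z : ℂ} (hz : z ∈ ball (0 : ℂ) 1) :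
    v z * ‖unitMonomial v (m i) z‖ ≤ (1 / 2) ^ j / 8 ∨
      v z * ‖unitMonomial v (m j) z‖ ≤ (1 / 2) ^ j / 8

/-- The gliding hump `∑ⱼ eⱼ`, where `eⱼ` is the unit monomial of degree `m j`. -/
def glidingHump (v : ℂ → ℝ) (m : ℕ → ℕ) (z : ℂ) : ℂ :=
  ∑' j, unitMonomial v (m j) z

theorem exists_hasDisjointPeaks {v : ℂ → ℝ} (hv : IsTypicalWeight v) {lam : ℂ}
    (hlam : ‖lam‖ = 1) :
    ∃ m : ℕ → ℕ, HasDisjointPeaks v m ∧ ∀ j, ‖1 - lam ^ m j‖ ≤ (1 / 2) ^ j := by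
  -- Each exponent `x.2` carries its own tolerance index `x.1`, since the tolerance
  -- has to be fixed before the exponent is chosen.
  obtain ⟨x, hx, hxx⟩ := exists_seq_of_forall_finset_exists
    (fun x : ℕ × ℕ ↦ 0 < x.2 ∧ ‖1 - lam ^ x.2‖ ≤ (1 / 2) ^ x.1)
    (fun x y ↦ x.1 < y.1 ∧ x.2 < y.2 ∧ ∀ z ∈ ball (0 : ℂ) 1,
      v z * ‖unitMonomial v x.2 z‖ ≤ (1 / 2) ^ y.1 / 8 ∨
        v z * ‖unitMonomial v y.2 z‖ ≤ (1 / 2) ^ y.1 / 8) fun s _ ↦ by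
      obtain ⟨k, hk⟩ := (s.image Prod.fst).exists_nat_subset_range
      have hlt (x) (hx : x ∈ s) : x.1 < k :=
        Finset.mem_range.1 (hk (Finset.mem_image_of_mem _ hx))
      have hlarge : ∀ᶠ m in atTop, ∀ x ∈ s, x.2 < m ∧ ∀ z ∈ ball (0 : ℂ) 1,
          v z * ‖unitMonomial v x.2 z‖ ≤ (1 / 2) ^ k / 8 ∨
            v z * ‖unitMonomial v m z‖ ≤ (1 / 2) ^ k / 8 :=
        (eventually_all_finset s).2 fun x _ ↦ (eventually_gt_atTop x.2).and
          (eventually_unitMonomial_almostDisjoint hv x.2 (by positivity))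
      obtain ⟨m, hm, hm0, hms⟩ := ((frequently_norm_one_sub_pow_lt hlam
        (by positivity : (0 : ℝ) < (1 / 2) ^ k)).and_eventually
          ((eventually_gt_atTop 0).and hlarge)).exists
      exact ⟨(k, m), ⟨hm0, hm.le⟩, fun x hx ↦ ⟨hlt x hx, hms x hx⟩⟩
  have hindex (j : ℕ) : (1 / 2 : ℝ) ^ (x j).1 ≤ (1 / 2) ^ j :=
    pow_le_pow_of_le_one (by norm_num) (by norm_num)
      (StrictMono.le_apply (f := fun j ↦ (x j).1) fun i j hij ↦ (hxx i j hij).1)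
  refine ⟨fun j ↦ (x j).2, ⟨fun j ↦ (hx j).1, fun i j hij ↦ (hxx i j hij).2.1, ?_⟩,
    fun j ↦ (hx j).2.trans (hindex j)⟩
  intro i j hij z hz
  have hle := div_le_div_of_nonneg_right (hindex j) (by norm_num : (0 : ℝ) ≤ 8)
  exact ((hxx i j hij).2.2 z hz).imp (·.trans hle) (·.trans hle)

section GlidingHump

variable {v : ℂ → ℝ} {m : ℕ → ℕ} {z : ℂ}

lemma summable_norm_unitMonomial_comp (hv : IsTypicalWeight v) (hm : m.Injective)
    (hz : z ∈ ball (0 : ℂ) 1) : Summable fun j ↦ ‖unitMonomial v (m j) z‖ :=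
  (summable_norm_unitMonomial hv hz).comp_injective hm

lemma differentiableOn_glidingHump (hv : IsTypicalWeight v) (hm : m.Injective) :
    DifferentiableOn ℂ (glidingHump v m) (ball 0 1) := by
  intro z hz
  obtain ⟨ρ, hzρ, hρ1⟩ := exists_between (mem_ball_zero_iff.1 hz)
  have hρ : ‖(ρ : ℂ)‖ = ρ := Complex.norm_of_nonneg ((norm_nonneg z).trans hzρ.le)
  have hdiff : DifferentiableOn ℂ (glidingHump v m) (ball 0 ρ) :=
    differentiableOn_tsum_of_summable_norm
      (summable_norm_unitMonomial_comp hv hm (mem_ball_zero_iff.2 (hρ.trans_lt hρ1)))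
      (fun j ↦ (differentiable_unitMonomial v (m j)).differentiableOn) isOpen_ball
      fun j w hw ↦ norm_unitMonomial_le_of_norm_le hv (m j)
        ((mem_ball_zero_iff.1 hw).le.trans_eq hρ.symm)
  exact (hdiff.differentiableAt
    (isOpen_ball.mem_nhds (mem_ball_zero_iff.2 hzρ))).differentiableWithinAt

namespace HasDisjointPeaks

lemma glidingHump_zero (hm : HasDisjointPeaks v m) : glidingHump v m 0 = 0 := by
  simp only [glidingHump, unitMonomial_zero (hm.pos _), tsum_zero]

lemma le_of_lt_peak (hm : HasDisjointPeaks v m) (hz : z ∈ ball (0 : ℂ) 1) {i j : ℕ} (hij : i ≠ j)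
    (hpeak : (1 / 2) ^ j / 8 < v z * ‖unitMonomial v (m j) z‖) :
    v z * ‖unitMonomial v (m i) z‖ ≤ (1 / 2) ^ max i j / 8 := by
  rcases hij.lt_or_gt with hlt | hgt
  · rw [max_eq_right hlt.le]
    exact (hm.le_or_le hlt hz).resolve_right hpeak.not_ge
  · rw [max_eq_left hgt.le]
    refine (hm.le_or_le hgt hz).resolve_left fun hle ↦ hpeak.not_ge (hle.trans ?_)
    exact div_le_div_of_nonneg_right
      (pow_le_pow_of_le_one (by norm_num) (by norm_num) hgt.le) (by norm_num)

lemma exists_forall_ne_le (hm : HasDisjointPeaks v m) (hz : z ∈ ball (0 : ℂ) 1) :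
    ∃ j, ∀ i ≠ j, v z * ‖unitMonomial v (m i) z‖ ≤ (1 / 2) ^ i / 8 := by
  by_cases! hpeak : ∃ j, (1 / 2) ^ j / 8 < v z * ‖unitMonomial v (m j) z‖
  · obtain ⟨j, hj⟩ := hpeak
    refine ⟨j, fun i hij ↦ (hm.le_of_lt_peak hz hij hj).trans ?_⟩
    exact div_le_div_of_nonneg_right
      (pow_le_pow_of_le_one (by norm_num) (by norm_num) (le_max_left i j)) (by norm_num)
  · exact ⟨0, fun i _ ↦ hpeak i⟩

end HasDisjointPeaks

lemma mul_norm_glidingHump_sub_le (hv : IsTypicalWeight v) (hm : m.Injective)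
    (hz : z ∈ ball (0 : ℂ) 1) {j : ℕ}
    (hj : ∀ i ≠ j, v z * ‖unitMonomial v (m i) z‖ ≤ (1 / 2) ^ i / 8) :
    v z * ‖glidingHump v m z - unitMonomial v (m j) z‖ ≤ 1 / 4 := by
  have hvz := hv.pos hz
  have hsum : HasSum (fun i : ℕ ↦ (1 / 2 : ℝ) ^ i / 8 / v z) (2 / 8 / v z) :=
    (hasSum_geometric_two.div_const 8).div_const (v z)
  have htail : ‖glidingHump v m z - unitMonomial v (m j) z‖ ≤ 2 / 8 / v z := by
    rw [glidingHump, (summable_norm_unitMonomial_comp hv hm hz).of_norm.tsum_eq_add_tsum_ite j,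
      add_sub_cancel_left]
    refine tsum_of_norm_bounded hsum fun i ↦ ?_
    split_ifs with hij
    · rw [norm_zero]; positivity
    · exact (le_div_iff₀' hvz).2 (hj i hij)
  rw [le_div_iff₀' hvz] at htail
  linarith

lemma HasDisjointPeaks.isHvInf_glidingHump (hv : IsTypicalWeight v) (hm : HasDisjointPeaks v m) :
    IsHvInf v (glidingHump v m) := by
  refine ⟨differentiableOn_glidingHump hv hm.strictMono.injective, 1 + 1 / 4, fun z hz ↦ ?_⟩
  obtain ⟨j, hj⟩ := hm.exists_forall_ne_le hz
  calc v z * ‖glidingHump v m z‖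
      ≤ v z * (‖unitMonomial v (m j) z‖ + ‖glidingHump v m z - unitMonomial v (m j) z‖) :=
        mul_le_mul_of_nonneg_left (norm_le_norm_add_norm_sub' _ _) (hv.pos hz).le
    _ ≤ 1 + 1 / 4 := by
        rw [mul_add]
        exact add_le_add (mul_norm_unitMonomial_le_one hv (m j) hz)
          (mul_norm_glidingHump_sub_le hv hm.strictMono.injective hz hj)

lemma HasDisjointPeaks.lt_mul_norm_glidingHump (hv : IsTypicalWeight v)
    (hm : HasDisjointPeaks v m) (hz : z ∈ ball (0 : ℂ) 1) {j : ℕ}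
    (hpeak : 1 / 2 < v z * ‖unitMonomial v (m j) z‖) :
    1 / 4 < v z * ‖glidingHump v m z‖ := by
  have hj : (1 / 2 : ℝ) ^ j ≤ 1 := pow_le_one₀ (by norm_num) (by norm_num)
  have hrest := mul_norm_glidingHump_sub_le hv hm.strictMono.injective hz fun i hij ↦
    (hm.le_of_lt_peak hz hij (by linarith)).trans <| div_le_div_of_nonneg_right
      (pow_le_pow_of_le_one (by norm_num) (by norm_num) (le_max_left i j)) (by norm_num)
  have htri := mul_le_mul_of_nonneg_left
    (norm_le_norm_add_norm_sub (glidingHump v m z) (unitMonomial v (m j) z)) (hv.pos hz).le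
  rw [mul_add] at htri
  linarith

lemma mul_norm_glidingHump_rotation_sub_le (hv : IsTypicalWeight v) (hm : m.Injective) {lam : ℂ}
    (hlam : ‖lam‖ = 1) (hz : z ∈ ball (0 : ℂ) 1) {w : ℂ} (hw : ‖w‖ = ‖z‖) :
    v z * ‖glidingHump v m (lam * w) - glidingHump v m w‖ ≤
      ∑' i, ‖1 - lam ^ m i‖ * (v z * ‖unitMonomial v (m i) z‖) := by
  have hwmem : w ∈ ball (0 : ℂ) 1 := by rwa [mem_ball_zero_iff, hw, ← mem_ball_zero_iff]
  have hlw : lam * w ∈ ball (0 : ℂ) 1 := by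
    rwa [mem_ball_zero_iff, norm_mul, hlam, one_mul, ← mem_ball_zero_iff]
  have hsum := summable_norm_unitMonomial_comp hv hm hwmem
  have hsub := (summable_norm_unitMonomial_comp hv hm hlw).of_norm.sub hsum.of_norm
  have hnorm : Summable fun i ↦ ‖unitMonomial v (m i) (lam * w) - unitMonomial v (m i) w‖ :=
    hsub.norm
  calc v z * ‖glidingHump v m (lam * w) - glidingHump v m w‖
      = v z * ‖∑' i, (unitMonomial v (m i) (lam * w) - unitMonomial v (m i) w)‖ := by
        rw [glidingHump, glidingHump, (summable_norm_unitMonomial_comp hv hm hlw).of_norm.tsum_sub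
          hsum.of_norm]
    _ ≤ v z * ∑' i, ‖unitMonomial v (m i) (lam * w) - unitMonomial v (m i) w‖ :=
        mul_le_mul_of_nonneg_left (norm_tsum_le_tsum_norm hnorm) (hv.pos hz).le
    _ = ∑' i, ‖1 - lam ^ m i‖ * (v z * ‖unitMonomial v (m i) z‖) := by
        rw [← tsum_mul_left]
        refine tsum_congr fun i ↦ ?_
        rw [norm_unitMonomial_mul_sub, norm_unitMonomial hv, norm_unitMonomial hv, hw,
          mul_left_comm]

/-- At the `j`-th peak the factors `‖1 - lam ^ m i‖` control the terms with `i` large, and the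
disjointness of the peaks those with `i < j`. -/
lemma HasDisjointPeaks.tendsto_tsum_at_peaks (hv : IsTypicalWeight v) (hm : HasDisjointPeaks v m)
    {lam : ℂ} (hlam : ∀ i, ‖1 - lam ^ m i‖ ≤ (1 / 2) ^ i) {z : ℕ → ℂ}
    (hz : ∀ j, z j ∈ ball (0 : ℂ) 1)
    (hpeak : ∀ j, 1 / 2 < v (z j) * ‖unitMonomial v (m j) (z j)‖) :
    Tendsto (fun j ↦ ∑' i, ‖1 - lam ^ m i‖ * (v (z j) * ‖unitMonomial v (m i) (z j)‖))
      atTop (𝓝 0) := by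
  have hnonneg (i j : ℕ) : 0 ≤ v (z j) * ‖unitMonomial v (m i) (z j)‖ :=
    mul_nonneg (hv.pos (hz j)).le (norm_nonneg _)
  have hpow : Tendsto (fun j ↦ (1 / 2 : ℝ) ^ j) atTop (𝓝 0) :=
    tendsto_pow_atTop_nhds_zero_of_lt_one (by norm_num) (by norm_num)
  have hoff (i : ℕ) : Tendsto (fun j ↦ v (z j) * ‖unitMonomial v (m i) (z j)‖) atTop (𝓝 0) := by
    refine squeeze_zero' (.of_forall (hnonneg i)) ?_ hpow
    filter_upwards [eventually_gt_atTop i] with j hij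
    have hj : (0 : ℝ) < (1 / 2) ^ j ∧ (1 / 2 : ℝ) ^ j ≤ 1 :=
      ⟨by positivity, pow_le_one₀ (by norm_num) (by norm_num)⟩
    have hle := (hm.le_or_le hij (hz j)).resolve_right (by linarith [hpeak j])
    linarith
  have hlim := tendsto_tsum_of_dominated_convergence summable_geometric_two
    (fun i ↦ (hoff i).const_mul ‖1 - lam ^ m i‖) <| .of_forall fun j i ↦ by
      rw [Real.norm_of_nonneg (mul_nonneg (norm_nonneg _) (hnonneg i j))]
      exact (mul_le_of_le_one_right (norm_nonneg _)
        (mul_norm_unitMonomial_le_one hv (m i) (hz j))).trans (hlam i)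
  simpa only [mul_zero, tsum_zero] using hlim

end GlidingHump

theorem not_meanErgodicHvInf_rotation {lam : ℂ} (hlam : ‖lam‖ = 1)
    (hroot : ∀ j : ℕ, 0 < j → lam ^ j ≠ 1) {v : ℂ → ℝ} (hv : IsTypicalWeight v) :
    ¬ MeanErgodicHvInf v fun w ↦ lam * w := by
  intro herg
  obtain ⟨m, hm, hlamm⟩ := exists_hasDisjointPeaks hv hlam
  have hf := hm.isHvInf_glidingHump hv
  obtain ⟨g, hg⟩ := herg _ hf
  obtain ⟨N, hN⟩ := hg (1 / 8) (by norm_num)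
  choose z hz hpeak using fun j ↦ exists_half_lt_mul_norm_unitMonomial hv (m j)
  obtain ⟨j, hj⟩ := ((hm.tendsto_tsum_at_peaks hv hlamm hz hpeak).eventually_lt_const
    (by positivity : 0 < 1 / (8 * ((N : ℝ) + 1)))).exists
  have hgz : g (z j) = 0 :=
    (eq_of_cesaro_rotation_approx hlam hroot hf.1 (hz j) (hv.pos (hz j)) fun ε hε ↦
      (hg ε hε).imp fun _ hn n hnn ↦ hn n hnn _ (hz j)).trans hm.glidingHump_zero
  have hmean : v (z j) * ‖cesaro (fun w ↦ lam * w) (glidingHump v m) (N + 1) (z j)‖ ≤ 1 / 8 := by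
    simpa only [hgz, sub_zero] using hN (N + 1) N.le_succ (z j) (hz j)
  have hpeak_le := mul_norm_le_mul_norm_cesaro_rotation_add hlam (hv.pos (hz j))
    (fun w ↦ mul_norm_glidingHump_rotation_sub_le hv hm.strictMono.injective hlam (hz j)) N.succ_pos
  have hlt := hm.lt_mul_norm_glidingHump hv (hz j) (hpeak j)
  rw [lt_div_iff₀ (by positivity)] at hj
  push_cast at hpeak_le
  linarith

section PowerSum

/-- The sum `∑ₖ r ^ n k`, the function whose power `-α` is the weight `v_α` up to scaling. -/
def powerSum (n : ℕ → ℕ) (r : ℝ) : ℝ :=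
  ∑' k, r ^ n k

variable {n : ℕ → ℕ} {r : ℝ}

lemma norm_pow_le_pow_of_abs_le (hn : ∀ k, k ≤ n k) {ρ : ℝ} (hr : |r| ≤ ρ) (hρ : ρ ≤ 1) (k : ℕ) :
    ‖r ^ n k‖ ≤ ρ ^ k := by
  rw [norm_pow, Real.norm_eq_abs]
  exact (pow_le_pow_of_le_one (abs_nonneg r) (hr.trans hρ) (hn k)).trans
    (pow_le_pow_left₀ (abs_nonneg r) hr k)

lemma summable_pow_of_le (hn : ∀ k, k ≤ n k) (hr : |r| < 1) : Summable fun k ↦ r ^ n k :=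
  .of_norm_bounded (summable_geometric_of_lt_one (abs_nonneg r) hr)
    (norm_pow_le_pow_of_abs_le hn le_rfl hr.le)

lemma continuousOn_powerSum (hn : ∀ k, k ≤ n k) :
    ContinuousOn (powerSum n) (Ico 0 1) := by
  intro r hr
  obtain ⟨ρ, hrρ, hρ1⟩ := exists_between hr.2
  have hcont : ContinuousOn (powerSum n) (Icc (-ρ) ρ) :=
    continuousOn_tsum (fun _ ↦ by fun_prop)
      (summable_geometric_of_lt_one (hr.1.trans hrρ.le) hρ1)
      fun k x hx ↦ norm_pow_le_pow_of_abs_le hn (abs_le.2 hx) hρ1.le k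
  exact (hcont.continuousAt (Icc_mem_nhds (by linarith [hr.1]) hrρ)).continuousWithinAt

lemma monotoneOn_powerSum (hn : ∀ k, k ≤ n k) :
    MonotoneOn (powerSum n) (Ico 0 1) := by
  have hsum {x : ℝ} (hx : x ∈ Ico (0 : ℝ) 1) : Summable fun k ↦ x ^ n k :=
    summable_pow_of_le hn ((abs_of_nonneg hx.1).trans_lt hx.2)
  exact fun x hx y hy hxy ↦ (hsum hx).tsum_le_tsum
    (fun k ↦ pow_le_pow_left₀ hx.1 hxy (n k)) (hsum hy)

lemma powerSum_pos (hn : ∀ k, k ≤ n k) (hr0 : 0 < r) (hr1 : r < 1) : 0 < powerSum n r :=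
  (summable_pow_of_le hn ((abs_of_pos hr0).trans_lt hr1)).tsum_pos
    (fun _ ↦ (pow_pos hr0 _).le) 0 (pow_pos hr0 _)

lemma tendsto_powerSum_atTop (hn : ∀ k, k ≤ n k) : Tendsto (powerSum n) (𝓝[<] 1) atTop := by
  refine tendsto_atTop.2 fun M ↦ ?_
  obtain ⟨L, hL⟩ := exists_nat_gt M
  have hpartial : Tendsto (fun r : ℝ ↦ ∑ k ∈ Finset.range L, r ^ n k) (𝓝[<] 1) (𝓝 L) := by
    have hcont : Continuous fun r : ℝ ↦ ∑ k ∈ Finset.range L, r ^ n k := by fun_prop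
    simpa using (hcont.tendsto 1).mono_left nhdsWithin_le_nhds
  filter_upwards [hpartial.eventually_const_lt hL, Ioo_mem_nhdsLT zero_lt_one] with r hM hr
  exact hM.le.trans <| (summable_pow_of_le hn ((abs_of_pos hr.1).trans_lt hr.2)).sum_le_tsum _
    fun k _ ↦ pow_nonneg hr.1.le _

end PowerSum

section PowerSumWeight

lemma isTypicalWeight_comp_norm {w : ℝ → ℝ} (hcont : ContinuousOn w (Ico 0 1))
    (hpos : ∀ r ∈ Ico (0 : ℝ) 1, 0 < w r) (hanti : AntitoneOn w (Ico 0 1))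
    (hlim : Tendsto w (𝓝[<] 1) (𝓝 0)) : IsTypicalWeight fun z ↦ w ‖z‖ := by
  have hmem {z : ℂ} (hz : z ∈ ball (0 : ℂ) 1) : ‖z‖ ∈ Ico (0 : ℝ) 1 :=
    ⟨norm_nonneg z, mem_ball_zero_iff.1 hz⟩
  refine ⟨hcont.comp continuous_norm.continuousOn fun z hz ↦ hmem hz, fun z hz ↦ hpos _ (hmem hz),
    ⟨w 0, fun z hz ↦ hanti (left_mem_Ico.2 one_pos) (hmem hz) (norm_nonneg z)⟩,
    fun z _ w' _ hzw ↦ congrArg w hzw, fun z hz w' hw' hzw ↦ hanti (hmem hz) (hmem hw') hzw,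
    fun ε hε ↦ ?_⟩
  obtain ⟨r, hr, hlt⟩ := (mem_nhdsLT_iff_exists_Ico_subset (a := (1 : ℝ))).1
    (hlim.eventually_lt_const hε)
  exact ⟨r, hr, fun z hz hrz ↦ hlt ⟨hrz, (hmem hz).2⟩⟩

/-- The weight `v_α`: constantly `1` for `‖z‖ ≤ r₀`, and proportional to `(∑ₖ ‖z‖ ^ n k) ^ (-α)`
beyond. -/
def powerSumWeight (n : ℕ → ℕ) (α r₀ : ℝ) (z : ℂ) : ℝ :=
  if ‖z‖ ≤ r₀ then 1 else powerSum n r₀ ^ α * powerSum n ‖z‖ ^ (-α)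

variable {n : ℕ → ℕ} {α r₀ : ℝ}

lemma powerSumWeight_eq_max (hn : ∀ k, k ≤ n k) (h0 : 0 < r₀) (h1 : r₀ < 1) (z : ℂ) :
    powerSumWeight n α r₀ z =
      powerSum n r₀ ^ α * powerSum n (max ‖z‖ r₀) ^ (-α) := by
  rw [powerSumWeight]
  split_ifs with hz
  · have hS := powerSum_pos hn h0 h1
    rw [max_eq_right hz, ← Real.rpow_add hS, add_neg_cancel, Real.rpow_zero]
  · rw [max_eq_left (not_le.1 hz).le]

theorem isTypicalWeight_powerSumWeight (hn : ∀ k, k ≤ n k) (hα : 0 < α) (h0 : 0 < r₀)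
    (h1 : r₀ < 1) : IsTypicalWeight (powerSumWeight n α r₀) := by
  have hmax {r : ℝ} (hr : r ∈ Ico (0 : ℝ) 1) : max r r₀ ∈ Ico (0 : ℝ) 1 :=
    ⟨hr.1.trans (le_max_left r r₀), max_lt hr.2 h1⟩
  have hS {r : ℝ} (hr : r ∈ Ico (0 : ℝ) 1) : 0 < powerSum n (max r r₀) :=
    powerSum_pos hn (lt_max_of_lt_right h0) (hmax hr).2
  have hC : 0 < powerSum n r₀ ^ α := Real.rpow_pos_of_pos (powerSum_pos hn h0 h1) α
  rw [funext (powerSumWeight_eq_max hn h0 h1)]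
  refine isTypicalWeight_comp_norm
    (w := fun r ↦ powerSum n r₀ ^ α * powerSum n (max r r₀) ^ (-α)) ?_ ?_ ?_ ?_
  · refine continuousOn_const.mul (ContinuousOn.rpow_const ?_ fun r hr ↦ .inl (hS hr).ne')
    exact (continuousOn_powerSum hn).comp (by fun_prop) fun r hr ↦ hmax hr
  · exact fun r hr ↦ mul_pos hC (Real.rpow_pos_of_pos (hS hr) _)
  · refine fun r hr s hs hrs ↦ mul_le_mul_of_nonneg_left ?_ hC.le
    exact Real.rpow_le_rpow_of_nonpos (hS hr)
      (monotoneOn_powerSum hn (hmax hr) (hmax hs) (max_le_max_right r₀ hrs)) (by linarith)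
  · have hnear : powerSum n =ᶠ[𝓝[<] 1] fun r ↦ powerSum n (max r r₀) := by
      filter_upwards [Ioo_mem_nhdsLT h1] with r hr
      rw [max_eq_left hr.1.le]
    have hlim := (tendsto_rpow_neg_atTop hα).comp
      ((tendsto_powerSum_atTop hn).congr' hnear)
    simpa only [mul_zero, Function.comp_apply] using hlim.const_mul (powerSum n r₀ ^ α)

end PowerSumWeight

theorem stmt_19_general {lam : ℂ} (hlam : ‖lam‖ = 1) (hroot : ∀ j : ℕ, 0 < j → lam ^ j ≠ 1)
    {v : ℂ → ℝ} (hv : IsTypicalWeight v) :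
    ¬ UnifMeanErgodicHv0 v (fun w ↦ lam * w) ∧ ¬ MeanErgodicHvInf v (fun w ↦ lam * w) :=
  ⟨not_unifMeanErgodicHv0_rotation hlam hroot hv, not_meanErgodicHvInf_rotation hlam hroot hv⟩

/-- **A weight for which the irrational rotation is not (uniformly) mean ergodic.** Let
`λ` with `|λ| = 1` not be a root of unity, `0 < α < 1`, `R > 1`, `r₀ ∈ (0,1)`, and let
`(n_k)_{k ≥ 1}` be a strictly increasing sequence of positive integers with `n_k ≥ k` and
`|1 - λ^{n_k}| ≤ 1/R^k`. Define the typical weight `v_α` by `v_α(r) = 1` for `r ≤ r₀` and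
`v_α(r) = C (∑_{k=1}^∞ r^{n_k})^{-α}` for `r₀ ≤ r < 1`, where `C = (∑_{k=1}^∞ r₀^{n_k})^α`.
Then for `φ(z) = λz` the operator `C_φ` is not uniformly mean ergodic on `H_{v_α}^0` and not
mean ergodic on `H_{v_α}^∞`. -/
theorem stmt_19 (lam : ℂ) (hlam : ‖lam‖ = 1) (hnotroot : ∀ j : ℕ, 0 < j → lam ^ j ≠ 1)
    (α : ℝ) (hα0 : 0 < α) (hα1 : α < 1) (R : ℝ) (hR : 1 < R)
    (r₀ : ℝ) (hr₀0 : 0 < r₀) (hr₀1 : r₀ < 1)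
    (ns : ℕ → ℕ) (hmono : StrictMono ns)
    (hns : ∀ k : ℕ, 1 ≤ k → k ≤ ns k)
    (hsmall : ∀ k : ℕ, 1 ≤ k → ‖1 - lam ^ ns k‖ ≤ 1 / R ^ k)
    (vα : ℂ → ℝ)
    (hvα : ∀ z : ℂ, vα z =
      if ‖z‖ ≤ r₀ then 1
      else (∑' k : ℕ, r₀ ^ ns (k + 1)) ^ α * (∑' k : ℕ, ‖z‖ ^ ns (k + 1)) ^ (-α)) :
    -- not uniformly mean ergodic on `H_{v_α}^0`
    (¬ ∃ P : (ℂ → ℂ) → ℂ → ℂ, ∀ ε > (0:ℝ), ∃ N : ℕ, ∀ n ≥ N,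
      ∀ f : ℂ → ℂ, IsHv0 vα f → (∀ z ∈ ball (0:ℂ) 1, vα z * ‖f z‖ ≤ 1) →
        ∀ z ∈ ball (0:ℂ) 1,
          vα z * ‖cesaro (fun w => lam * w) f n z - P f z‖ ≤ ε) ∧
    -- not mean ergodic on `H_{v_α}^∞`
    (¬ ∀ f : ℂ → ℂ, IsHvInf vα f → ∃ g : ℂ → ℂ, ∀ ε > (0:ℝ), ∃ N : ℕ, ∀ n ≥ N,
      ∀ z ∈ ball (0:ℂ) 1,
        vα z * ‖cesaro (fun w => lam * w) f n z - g z‖ ≤ ε) := by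
  obtain rfl : vα = powerSumWeight (fun k ↦ ns (k + 1)) α r₀ := funext hvα
  exact stmt_19_general hlam hnotroot (isTypicalWeight_powerSumWeight
    (fun k ↦ k.le_succ.trans (hns (k + 1) k.succ_pos)) hα0 hr₀0 hr₀1)
end
end
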